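/- Fix α > 0. For n > α/π let ψ_{α,n} be as in the context, and let ψ_n^{(1)}(t) = u_{−1/2,1}((t−μ_{α,n})/(1−μ_{α,n}t)) − 1 and ψ_n^{(−1)}(t) = u_{1/2,1}((−t−μ_{α,n})/(1+μ_{α,n}t)) − 1. Then the bounded operators I + H(ψ_{α,n}), I + H(ψ_n^{(1)}) and I + H(ψ_n^{(−1)}) on ℓ²(ℕ) are invertible, and det[P_n (I+H(ψ_{α,n}))^{−1} P_n] − det[P_n (I+H(ψ_n^{(1)}))^{−1} P_n] · det[P_n (I+H(ψ_n^{(−1)}))^{−1} P_n] → 0 as n → ∞. -/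

import Mathlib

open Filter MeasureTheory
open scoped InnerProductSpace

noncomputable section

/-- ℓ²(ℕ) over ℂ. -/
abbrev l2 : Type := lp (fun _ : ℕ => ℂ) 2

/-- The `k`-th Fourier coefficient of a function on the unit circle, given as a
`2π`-periodic function of the angle: `a_k = (1/(2π)) ∫_0^{2π} f(θ) e^{-ikθ} dθ`. -/
def fc (f : ℝ → ℂ) (k : ℤ) : ℂ :=
  ((1 / (2 * Real.pi) : ℝ) : ℂ) *
    ∫ θ in (0:ℝ)..(2 * Real.pi), f θ * Complex.exp (-(Complex.I * k * θ))

/-- The standard orthonormal basis vector `e_j` of ℓ²(ℕ). -/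
def ee (j : ℕ) : l2 := lp.single 2 j 1

/-- Matrix entry `⟨e_j, A e_k⟩` of an operator on ℓ²(ℕ). -/
def ent (A : l2 →L[ℂ] l2) (j k : ℕ) : ℂ := ⟪ee j, A (ee k)⟫_ℂ

/-- The determinant of the `n × n` section `Pₙ A Pₙ` of an operator on ℓ²(ℕ). -/
def detP (n : ℕ) (A : l2 →L[ℂ] l2) : ℂ := (Matrix.of fun j k : Fin n => ent A j k).det

/-- The function `χ` on the circle: `χ(e^{iθ}) = i` for `0 < θ < π` and
`χ(e^{iθ}) = −i` for `−π < θ < 0`. -/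
def chi (θ : ℝ) : ℂ := if 0 < Real.sin θ then Complex.I else -Complex.I

/-- The function `u_{β,1}` evaluated at a point `t` of the unit circle:
`u_{β,1}(e^{iθ}) = exp(iβ(θ−π))` for `0 < θ < 2π`, i.e. `exp(β · Log(−t))`. -/
def uc (β : ℂ) (t : ℂ) : ℂ := Complex.exp (β * Complex.log (-t))

/-! ### Determinants and column norms -/

/-- Hadamard's inequality, for the determinant of a family of vectors in `ℂⁿ`. -/
theorem norm_basisFun_det_le {n : ℕ} (v : Fin n → EuclideanSpace ℂ (Fin n)) :
    ‖(EuclideanSpace.basisFun (Fin n) ℂ).toBasis.det v‖ ≤ ∏ i, ‖v i‖ := by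
  set e := EuclideanSpace.basisFun (Fin n) ℂ
  set b := InnerProductSpace.gramSchmidtOrthonormalBasis
    (𝕜 := ℂ) (by simp : Module.finrank ℂ (EuclideanSpace ℂ (Fin n)) = Fintype.card (Fin n)) v
  have h1 : e.toBasis.det v = e.toBasis.det b * b.toBasis.det v := by
    rw [Module.Basis.det_apply, Module.Basis.det_apply, Module.Basis.det_apply, ← Matrix.det_mul,
      ← b.coe_toBasis, Module.Basis.toMatrix_mul_toMatrix]
  rw [h1, norm_mul, e.det_to_matrix_orthonormalBasis b, one_mul,
    InnerProductSpace.gramSchmidtOrthonormalBasis_det, norm_prod]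
  refine Finset.prod_le_prod (fun _ _ => norm_nonneg _) fun i _ => ?_
  refine (norm_inner_le_norm _ _).trans ?_
  rw [b.orthonormal.1 i, one_mul]

/-- On families of vectors in the unit ball the determinant is Lipschitz for the sum of the
Euclidean distances. -/
theorem norm_basisFun_det_sub_le {n : ℕ} (v w : Fin n → EuclideanSpace ℂ (Fin n))
    (hv : ∀ i, ‖v i‖ ≤ 1) (hw : ∀ i, ‖w i‖ ≤ 1) :
    ‖(EuclideanSpace.basisFun (Fin n) ℂ).toBasis.det v -
      (EuclideanSpace.basisFun (Fin n) ℂ).toBasis.det w‖ ≤ ∑ i, ‖v i - w i‖ := by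
  have h := MultilinearMap.norm_image_sub_le_of_bound'
    (EuclideanSpace.basisFun (Fin n) ℂ).toBasis.det.toMultilinearMap zero_le_one
    (fun m => by simpa using norm_basisFun_det_le m) v w
  refine h.trans ?_
  rw [one_mul]
  refine Finset.sum_le_sum fun i _ => ?_
  rw [← Finset.mul_prod_erase _ _ (Finset.mem_univ i), if_pos rfl]
  refine mul_le_of_le_one_right (norm_nonneg _) (Finset.prod_le_one ?_ ?_)
  · intro j hj
    rw [if_neg (Finset.ne_of_mem_erase hj)]
    exact le_max_of_le_left (norm_nonneg _)
  · intro j hj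
    rw [if_neg (Finset.ne_of_mem_erase hj)]
    exact max_le (hv j) (hw j)

/-! ### Matrix entries of operators on `ℓ²` -/

theorem orthonormal_ee : Orthonormal ℂ ee := by
  rw [orthonormal_iff_ite]
  intro i j
  simp only [ee, lp.inner_single_left, lp.single_apply, Pi.single_apply, RCLike.inner_apply]
  simp

theorem inner_ee_left (j : ℕ) (x : l2) : ⟪ee j, x⟫_ℂ = x j := by
  simp [ee, lp.inner_single_left]

theorem hasSum_ee (x : l2) : HasSum (fun j => x j • ee j) x := by
  have h := lp.hasSum_single (p := 2) (by simp) x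
  convert h using 2 with j
  rw [ee, ← lp.single_smul]
  simp

theorem hasSum_norm_sq (x : l2) : HasSum (fun j => ‖x j‖ ^ 2) (‖x‖ ^ 2) := by
  have h := lp.hasSum_norm (p := 2) (by simp) x
  simpa using h

theorem sum_norm_sq_le (x : l2) (N : ℕ) : ∑ j ∈ Finset.range N, ‖x j‖ ^ 2 ≤ ‖x‖ ^ 2 :=
  sum_le_hasSum _ (fun _ _ => by positivity) (hasSum_norm_sq x)

theorem norm_ee (j : ℕ) : ‖ee j‖ = 1 := orthonormal_ee.1 j

theorem ent_eq (A : l2 →L[ℂ] l2) (j k : ℕ) : ent A j k = A (ee k) j := inner_ee_left _ _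

theorem hasSum_ent_mul (A B : l2 →L[ℂ] l2) (j k : ℕ) :
    HasSum (fun l => ent A j l * ent B l k) (ent (A ∘L B) j k) := by
  have h := ((hasSum_ee (B (ee k))).mapL A).mapL (innerSL ℂ (ee j))
  simp only [map_smul, innerSL_apply_apply, smul_eq_mul] at h
  have he : (fun l => ent A j l * ent B l k) = fun l => B (ee k) l * ⟪ee j, A (ee l)⟫_ℂ := by
    funext l
    rw [mul_comm, ent_eq B]
    rfl
  rw [he]
  exact h

/-- The orthogonal projection onto the span of `e_0, …, e_{n-1}`. -/
def proj (n : ℕ) : l2 →L[ℂ] l2 :=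
  ∑ l ∈ Finset.range n, (innerSL ℂ (ee l)).smulRight (ee l)

theorem proj_apply (n : ℕ) (x : l2) : proj n x = ∑ l ∈ Finset.range n, x l • ee l := by
  simp [proj, inner_ee_left]

theorem norm_proj_apply_le (n : ℕ) (x : l2) : ‖proj n x‖ ≤ ‖x‖ := by
  rw [proj_apply]
  refine le_of_sq_le_sq ?_ (norm_nonneg _)
  have h := orthonormal_ee.inner_sum (fun l => x l) (fun l => x l) (Finset.range n)
  rw [← inner_self_eq_norm_sq (𝕜 := ℂ), h]
  refine le_trans (le_of_eq ?_) (sum_norm_sq_le x n)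
  simp [Complex.conj_mul', ← Complex.ofReal_pow]

theorem ent_comp_proj_comp (A B : l2 →L[ℂ] l2) (n j k : ℕ) :
    ent (A ∘L proj n ∘L B) j k = ∑ l ∈ Finset.range n, ent A j l * ent B l k := by
  rw [ent_eq]
  simp only [ContinuousLinearMap.comp_apply, proj_apply, map_sum, map_smul]
  rw [← inner_ee_left, inner_sum]
  refine Finset.sum_congr rfl fun l _ => ?_
  rw [inner_smul_right, mul_comm, ent_eq B]
  rfl

theorem detP_comp_proj_comp (A B : l2 →L[ℂ] l2) (n : ℕ) :
    detP n (A ∘L proj n ∘L B) = detP n A * detP n B := by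
  rw [detP, detP, detP, ← Matrix.det_mul]
  congr 1
  ext j k
  simp only [Matrix.of_apply, Matrix.mul_apply, ent_comp_proj_comp]
  rw [Finset.sum_range]

theorem norm_detP_sub_le (X Y : l2 →L[ℂ] l2) (hX : ∀ x, ‖X x‖ ≤ ‖x‖) (hY : ∀ x, ‖Y x‖ ≤ ‖x‖)
    (n : ℕ) : ‖detP n X - detP n Y‖ ≤ ∑ k ∈ Finset.range n, ‖(X - Y) (ee k)‖ := by
  let tr : l2 → EuclideanSpace ℂ (Fin n) := fun x => WithLp.toLp 2 fun j => x j
  have htr : ∀ x, ‖tr x‖ ≤ ‖x‖ := fun x => by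
    refine le_of_sq_le_sq ?_ (norm_nonneg _)
    rw [EuclideanSpace.norm_sq_eq]
    refine le_trans (le_of_eq ?_) (sum_norm_sq_le x n)
    rw [Finset.sum_range]
  have hdet : ∀ Z : l2 →L[ℂ] l2, detP n Z =
      (EuclideanSpace.basisFun (Fin n) ℂ).toBasis.det fun k : Fin n => tr (Z (ee k)) := fun Z => by
    rw [detP, Module.Basis.det_apply]
    congr 1
    ext j k
    simp [Module.Basis.toMatrix_apply, tr, ent_eq]
  rw [hdet, hdet]
  refine (norm_basisFun_det_sub_le _ _
    (fun i => (htr _).trans ((hX _).trans (norm_ee _).le))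
    (fun i => (htr _).trans ((hY _).trans (norm_ee _).le))).trans ?_
  rw [Finset.sum_range]
  refine Finset.sum_le_sum fun k _ => ?_
  refine le_trans (le_of_eq ?_) (htr ((X - Y) (ee k)))
  congr 1

/-! ### Hilbert–Schmidt bounds -/

/-- The Hilbert–Schmidt norm of `E` is at most `c`. -/
def HSBound (E : l2 →L[ℂ] l2) (c : ℝ) : Prop :=
  ∀ M N : ℕ, ∑ j ∈ Finset.range M, ∑ k ∈ Finset.range N, ‖ent E j k‖ ^ 2 ≤ c ^ 2

namespace HSBound

variable {E : l2 →L[ℂ] l2} {c : ℝ}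

theorem sum_norm_sq (h : HSBound E c) (N : ℕ) :
    ∑ k ∈ Finset.range N, ‖E (ee k)‖ ^ 2 ≤ c ^ 2 := by
  have hl : Tendsto (fun M => ∑ k ∈ Finset.range N, ∑ j ∈ Finset.range M, ‖ent E j k‖ ^ 2) atTop
      (nhds (∑ k ∈ Finset.range N, ‖E (ee k)‖ ^ 2)) := by
    refine tendsto_finsetSum _ fun k _ => ?_
    simp only [ent_eq]
    exact (hasSum_norm_sq (E (ee k))).tendsto_sum_nat
  refine le_of_tendsto' hl fun M => ?_
  rw [Finset.sum_comm]
  exact h M N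

theorem of_sum_norm_sq (h : ∀ N : ℕ, ∑ k ∈ Finset.range N, ‖E (ee k)‖ ^ 2 ≤ c ^ 2) :
    HSBound E c := fun M N => by
  rw [Finset.sum_comm]
  refine (Finset.sum_le_sum fun k _ => ?_).trans (h N)
  simp only [ent_eq]
  exact sum_norm_sq_le _ _

theorem comp_left (h : HSBound E c) {B : l2 →L[ℂ] l2} (hB : ∀ x, ‖B x‖ ≤ ‖x‖) :
    HSBound (B ∘L E) c :=
  of_sum_norm_sq fun N => le_trans (Finset.sum_le_sum fun k _ => by
    gcongr
    exact hB _) (h.sum_norm_sq N)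

theorem adjoint (h : HSBound E c) : HSBound (ContinuousLinearMap.adjoint E) c := fun M N => by
  rw [Finset.sum_comm]
  refine le_trans (le_of_eq ?_) (h N M)
  refine Finset.sum_congr rfl fun k _ => Finset.sum_congr rfl fun j _ => ?_
  rw [ent, ent, ContinuousLinearMap.adjoint_inner_right, ← inner_conj_symm, RCLike.norm_conj]

theorem comp_right (h : HSBound E c) {B : l2 →L[ℂ] l2} (hB : ∀ x, ‖B x‖ ≤ ‖x‖) :
    HSBound (E ∘L B) c := by
  have hB' : ∀ x, ‖ContinuousLinearMap.adjoint B x‖ ≤ ‖x‖ := fun x => by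
    refine (ContinuousLinearMap.le_opNorm _ _).trans ?_
    rw [LinearIsometryEquiv.norm_map]
    refine mul_le_of_le_one_left (norm_nonneg _) (B.opNorm_le_bound zero_le_one fun y => ?_)
    simpa using hB y
  have := (h.adjoint.comp_left hB').adjoint
  rwa [ContinuousLinearMap.adjoint_comp, ContinuousLinearMap.adjoint_adjoint,
    ContinuousLinearMap.adjoint_adjoint] at this

theorem sum_norm_le (h : HSBound E c) (hc : 0 ≤ c) (n : ℕ) :
    ∑ k ∈ Finset.range n, ‖E (ee k)‖ ≤ Real.sqrt n * c := by
  refine le_of_sq_le_sq ?_ (by positivity)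
  refine sq_sum_le_card_mul_sum_sq.trans ?_
  rw [mul_pow, Real.sq_sqrt (Nat.cast_nonneg n), Finset.card_range]
  gcongr
  exact h.sum_norm_sq n

end HSBound

/-! ### Operators bounded below -/

/-- A real sequence all of whose finite Hankel sections are positive semidefinite. -/
def HankelNonneg (c : ℕ → ℝ) : Prop :=
  ∀ (N : ℕ) (x : ℕ → ℂ), 0 ≤ (∑ j ∈ Finset.range N, ∑ k ∈ Finset.range N,
    (starRingEnd ℂ) (x j) * c (j + k) * x k).re

theorem HankelNonneg.alternating {c : ℕ → ℝ} (h : HankelNonneg c) :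
    HankelNonneg fun m => (-1) ^ m * c m := fun N x => by
  refine (h N fun j => (-1) ^ j * x j).trans_eq ?_
  congr 1
  refine Finset.sum_congr rfl fun j _ => Finset.sum_congr rfl fun k _ => ?_
  simp only [map_mul, map_pow, map_neg, map_one, Complex.ofReal_mul, Complex.ofReal_pow,
    Complex.ofReal_neg, Complex.ofReal_one, pow_add]
  ring

theorem HankelNonneg.add {c d : ℕ → ℝ} (hc : HankelNonneg c) (hd : HankelNonneg d) :
    HankelNonneg fun m => c m + d m := fun N x => by
  refine (add_nonneg (hc N x) (hd N x)).trans_eq ?_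
  rw [← Complex.add_re, ← Finset.sum_add_distrib]
  congr 1
  refine Finset.sum_congr rfl fun j _ => ?_
  rw [← Finset.sum_add_distrib]
  refine Finset.sum_congr rfl fun k _ => ?_
  push_cast
  ring

theorem HankelNonneg.norm_sq_le {c : ℕ → ℝ} (hc : HankelNonneg c) {A : l2 →L[ℂ] l2}
    (hA : ∀ j k, ent A j k = (if j = k then 1 else 0) + (c (j + k) : ℂ)) (x : l2) :
    ‖x‖ ^ 2 ≤ (⟪x, A x⟫_ℂ).re := by
  have hlim : Tendsto (fun N => ∑ j ∈ Finset.range N, x j • ee j) atTop (nhds x) :=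
    (hasSum_ee x).tendsto_sum_nat
  have h1 := (hlim.norm).pow 2
  have h2 := (Complex.continuous_re.tendsto _).comp
    (hlim.inner (𝕜 := ℂ) ((A.continuous.tendsto _).comp hlim))
  refine le_of_tendsto_of_tendsto' h1 h2 fun N => ?_
  have hn : ((‖∑ j ∈ Finset.range N, x j • ee j‖ : ℂ)) ^ 2
      = ∑ j ∈ Finset.range N, (starRingEnd ℂ) (x j) * x j := by
    have := orthonormal_ee.inner_sum (fun l => x l) (fun l => x l) (Finset.range N)
    rw [← this, inner_self_eq_norm_sq_to_K]
    rfl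
  have hi : ⟪∑ j ∈ Finset.range N, x j • ee j, A (∑ j ∈ Finset.range N, x j • ee j)⟫_ℂ
      = ∑ j ∈ Finset.range N, (starRingEnd ℂ) (x j) * x j +
        ∑ j ∈ Finset.range N, ∑ k ∈ Finset.range N, (starRingEnd ℂ) (x j) * c (j + k) * x k := by
    rw [map_sum, sum_inner, ← Finset.sum_add_distrib]
    refine Finset.sum_congr rfl fun j hj => ?_
    rw [inner_sum]
    have : ∀ k ∈ Finset.range N, ⟪x j • ee j, A (x k • ee k)⟫_ℂ
        = (if j = k then (starRingEnd ℂ) (x j) * x k else 0)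
          + (starRingEnd ℂ) (x j) * c (j + k) * x k := fun k _ => by
      rw [map_smul, inner_smul_left, inner_smul_right]
      have he := hA j k
      rw [ent] at he
      rw [he]
      split_ifs <;> ring
    rw [Finset.sum_congr rfl this, Finset.sum_add_distrib, Finset.sum_ite_eq, if_pos hj]
  have hre : ‖∑ j ∈ Finset.range N, x j • ee j‖ ^ 2
      = (∑ j ∈ Finset.range N, (starRingEnd ℂ) (x j) * x j).re := by
    rw [← hn, ← Complex.ofReal_pow, Complex.ofReal_re]
  have hgoal : (⟪∑ j ∈ Finset.range N, x j • ee j,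
      A (∑ j ∈ Finset.range N, x j • ee j)⟫_ℂ).re = _ := congrArg Complex.re hi
  refine le_of_le_of_eq ?_ hgoal.symm
  rw [Complex.add_re, hre]
  exact le_add_of_nonneg_right (hc N _)

theorem HankelNonneg.exists_inverse {c : ℕ → ℝ} (hc : HankelNonneg c) {A : l2 →L[ℂ] l2}
    (hA : ∀ j k, ent A j k = (if j = k then 1 else 0) + (c (j + k) : ℂ)) :
    ∃ B : l2 →L[ℂ] l2, (A ∘L B = 1 ∧ B ∘L A = 1) ∧ ∀ x, ‖B x‖ ≤ ‖x‖ := by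
  have hpos := hc.norm_sq_le hA
  have hle : ∀ x, ‖x‖ ≤ ‖A x‖ := fun x => by
    have h : ‖x‖ ^ 2 ≤ ‖x‖ * ‖A x‖ :=
      (hpos x).trans ((Complex.re_le_norm _).trans (norm_inner_le_norm _ _))
    rcases (norm_nonneg x).eq_or_lt with h0 | h0
    · rw [← h0]; exact norm_nonneg _
    · exact le_of_mul_le_mul_left (by rwa [sq] at h) h0
  obtain ⟨u, hu⟩ := ContinuousLinearMap.isUnit_of_forall_le_norm_inner_map A
    (c := 1) one_pos fun x => by
      rw [NNReal.coe_one, mul_one, norm_inner_symm]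
      exact (hpos x).trans (Complex.re_le_norm _)
  have h1 : A ∘L ((u⁻¹ : (l2 →L[ℂ] l2)ˣ) : l2 →L[ℂ] l2) = 1 := by rw [← hu]; exact u.mul_inv
  have h2 : ((u⁻¹ : (l2 →L[ℂ] l2)ˣ) : l2 →L[ℂ] l2) ∘L A = 1 := by rw [← hu]; exact u.inv_mul
  refine ⟨_, ⟨h1, h2⟩, fun x => (hle _).trans_eq ?_⟩
  rw [← ContinuousLinearMap.comp_apply, h1]
  rfl

/-! ### Products of Hankel operators with alternating signs -/

theorem abs_sum_Ico_alternating_le {u : ℕ → ℝ} (hu : Antitone u) (h0 : ∀ m, 0 ≤ u m) (n L : ℕ) :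
    |∑ l ∈ Finset.Ico n L, (-1) ^ l * u l| ≤ u n := by
  have key : ∀ (d n : ℕ), 0 ≤ (-1) ^ n * ∑ l ∈ Finset.Ico n (n + d), (-1) ^ l * u l ∧
      (-1) ^ n * ∑ l ∈ Finset.Ico n (n + d), (-1) ^ l * u l ≤ u n := by
    intro d
    induction d with
    | zero => intro n; simp [h0]
    | succ d ih =>
      intro n
      obtain ⟨h1, h2⟩ := ih (n + 1)
      rw [Finset.sum_eq_sum_Ico_succ_bot (by omega), mul_add, ← mul_assoc, ← mul_pow]
      rw [show n + (d + 1) = n + 1 + d by ring]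
      rw [pow_succ] at h1 h2
      have h3 := hu (Nat.le_succ n)
      simp only [Nat.succ_eq_add_one] at h3
      norm_num
      constructor <;> linarith
  rcases le_total n L with h | h
  · obtain ⟨d, rfl⟩ := Nat.exists_eq_add_of_le h
    obtain ⟨h1, h2⟩ := key d n
    refine le_trans (le_of_eq ?_) h2
    rw [← abs_of_nonneg h1, abs_mul, abs_pow]
    simp
  · simp [Finset.Ico_eq_empty_of_le h, h0]

theorem HSBound.of_rank_one {E : l2 →L[ℂ] l2} {u v : ℕ → ℝ} {S : ℝ}
    (h : ∀ j k, ‖ent E j k‖ ≤ u j * v k)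
    (hu : ∀ M, ∑ j ∈ Finset.range M, u j ^ 2 ≤ S) (hv : ∀ M, ∑ j ∈ Finset.range M, v j ^ 2 ≤ S) :
    HSBound E S := fun M N => by
  have hS : 0 ≤ S := by simpa using hu 0
  calc ∑ j ∈ Finset.range M, ∑ k ∈ Finset.range N, ‖ent E j k‖ ^ 2
      ≤ ∑ j ∈ Finset.range M, ∑ k ∈ Finset.range N, u j ^ 2 * v k ^ 2 := by
        refine Finset.sum_le_sum fun j _ => Finset.sum_le_sum fun k _ => ?_
        rw [← mul_pow]
        exact pow_le_pow_left₀ (norm_nonneg _) (h j k) 2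
    _ = (∑ j ∈ Finset.range M, u j ^ 2) * ∑ k ∈ Finset.range N, v k ^ 2 := by
        rw [Finset.sum_mul_sum]
    _ ≤ S * S := mul_le_mul (hu M) (hv N) (Finset.sum_nonneg fun _ _ => sq_nonneg _) hS
    _ = S ^ 2 := (sq S).symm

/-- If the matrix entries of `X` and `Y` are Hankel for antitone nonnegative sequences, up to
signs alternating in the summation index, then so is the bound on the tails of the product. -/
theorem norm_ent_comp_sub_le {X Y : l2 →L[ℂ] l2} {u v : ℕ → ℝ}
    (hu : Antitone u) (hu0 : ∀ m, 0 ≤ u m) (hv : Antitone v) (hv0 : ∀ m, 0 ≤ v m)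
    (hXY : ∀ j k, ∃ ε : ℝ, |ε| = 1 ∧
      ∀ l, ent X j l * ent Y l k = ((ε * ((-1) ^ l * (u (j + l) * v (l + k))) : ℝ) : ℂ))
    (n j k : ℕ) :
    ‖ent (X ∘L Y) j k - ∑ l ∈ Finset.range n, ent X j l * ent Y l k‖ ≤ u j * v k := by
  obtain ⟨ε, hε, h⟩ := hXY j k
  have hanti : Antitone fun l => u (j + l) * v (l + k) := fun l m hlm =>
    mul_le_mul (hu (by omega)) (hv (by omega)) (hv0 _) (hu0 _)
  have hlim := ((hasSum_ent_mul X Y j k).tendsto_sum_nat.sub_const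
    (∑ l ∈ Finset.range n, ent X j l * ent Y l k)).norm
  refine le_of_tendsto hlim (eventually_atTop.2 ⟨n, fun L hL => ?_⟩)
  rw [← Finset.sum_Ico_eq_sub _ hL, Finset.sum_congr rfl fun l _ => h l, ← Complex.ofReal_sum,
    Complex.norm_real, ← Finset.mul_sum, Real.norm_eq_abs, abs_mul, hε, one_mul]
  refine (abs_sum_Ico_alternating_le hanti (fun m => mul_nonneg (hu0 _) (hv0 _)) n L).trans ?_
  exact mul_le_mul (hu (by omega)) (hv (by omega)) (hv0 _) (hu0 _)

theorem sum_sum_sq_le_of_le_sub_succ {e c : ℕ → ℝ} {ε : ℝ} (hc : ∀ m, 0 ≤ c m)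
    (hd : Antitone fun m => c m - c (m + 1)) (hd0 : ∀ m, 0 ≤ c m - c (m + 1))
    (he : ∀ m, |e m| ≤ ε * (c m - c (m + 1))) (M N : ℕ) :
    ∑ j ∈ Finset.range M, ∑ k ∈ Finset.range N, e (j + k) ^ 2 ≤ (ε * c 0) ^ 2 := by
  have hs : ∀ M, ∑ j ∈ Finset.range M, (c j - c (j + 1)) ≤ c 0 := fun M => by
    rw [Finset.sum_range_sub']
    linarith [hc M]
  calc ∑ j ∈ Finset.range M, ∑ k ∈ Finset.range N, e (j + k) ^ 2
      ≤ ∑ j ∈ Finset.range M, ∑ k ∈ Finset.range N,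
          ε ^ 2 * ((c j - c (j + 1)) * (c k - c (k + 1))) := by
        refine Finset.sum_le_sum fun j _ => Finset.sum_le_sum fun k _ => ?_
        rw [← sq_abs]
        refine (pow_le_pow_left₀ (abs_nonneg _) (he _) 2).trans ?_
        rw [mul_pow, sq (c _ - _)]
        have h1 := hd (Nat.le_add_right j k)
        have h2 := hd (Nat.le_add_left k j)
        exact mul_le_mul_of_nonneg_left (mul_le_mul h1 h2 (hd0 _) (hd0 _)) (sq_nonneg _)
    _ = ε ^ 2 * ((∑ j ∈ Finset.range M, (c j - c (j + 1))) *
          ∑ k ∈ Finset.range N, (c k - c (k + 1))) := by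
        rw [Finset.sum_mul_sum, Finset.mul_sum]
        simp only [Finset.mul_sum]
    _ ≤ ε ^ 2 * (c 0 * c 0) :=
        mul_le_mul_of_nonneg_left (mul_le_mul (hs M) (hs N)
          (Finset.sum_nonneg fun _ _ => hd0 _) (hc 0)) (sq_nonneg _)
    _ = (ε * c 0) ^ 2 := by ring

theorem proj_apply_coord (n j : ℕ) (x : l2) : proj n x j = if j < n then x j else 0 := by
  rw [← inner_ee_left, proj_apply, inner_sum]
  simp only [inner_smul_right]
  have : ∀ l, ⟪ee j, ee l⟫_ℂ = if j = l then 1 else 0 := orthonormal_iff_ite.1 orthonormal_ee j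
  simp [this]

theorem proj_ee {n k : ℕ} (h : k < n) : proj n (ee k) = ee k := by
  ext j
  rw [proj_apply_coord]
  split_ifs with hj
  · rfl
  · rw [← inner_ee_left, orthonormal_iff_ite.1 orthonormal_ee, if_neg (by omega)]

theorem proj_comp_proj (n : ℕ) : proj n ∘L proj n = proj n := by
  ext x j
  simp only [ContinuousLinearMap.comp_apply, proj_apply_coord]
  split_ifs <;> rfl

theorem detP_proj_comp_comp_proj (n : ℕ) (Z : l2 →L[ℂ] l2) :
    detP n (proj n ∘L Z ∘L proj n) = detP n Z := by
  rw [detP, detP]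
  congr 1
  ext j k
  simp [ent_eq, proj_ee k.2, proj_apply_coord]

theorem ent_sub (X Y : l2 →L[ℂ] l2) (j k : ℕ) : ent (X - Y) j k = ent X j k - ent Y j k := by
  simp [ent]

theorem ent_add (X Y : l2 →L[ℂ] l2) (j k : ℕ) : ent (X + Y) j k = ent X j k + ent Y j k := by
  simp [ent]

theorem ent_one (j k : ℕ) : ent 1 j k = if j = k then 1 else 0 :=
  orthonormal_iff_ite.1 orthonormal_ee j k

theorem comp_comp_comp_resolvent {A A1 A2 B B1 B2 P : l2 →L[ℂ] l2} (hP : P * P = P)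
    (hA : B * A = 1) (h1 : A1 * B1 = 1) (h2 : A2 * B2 = 1) (h2' : B2 * A2 = 1) :
    P * B * P - P * B2 * P * B1 * P =
      P * (B * ((A1 - 1) * (A2 - 1) + ((A1 - 1) + (A2 - 1) - (A - 1))) * (B2 * B1)) * P +
      P * (B2 * ((A2 - 1) * (A1 - 1) - (A2 - 1) * P * (A1 - 1)) * B1) * P := by
  have e1 : B * ((A1 - 1) * (A2 - 1) + ((A1 - 1) + (A2 - 1) - (A - 1))) * (B2 * B1)
      = B * A1 * (A2 * B2) * B1 - B * A * B2 * B1 := by noncomm_ring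
  have e2 : B2 * ((A2 - 1) * (A1 - 1) - (A2 - 1) * P * (A1 - 1)) * B1
      = (B2 * A2 - B2) * (1 - P) * (A1 * B1 - B1) := by noncomm_ring
  rw [e1, e2, h2, h2', h1, hA, mul_one, mul_assoc B A1 B1, h1]
  have hP1 : P * (1 - P) = 0 := by rw [mul_sub, hP, mul_one, sub_self]
  have hP2 : (1 - P) * P = 0 := by rw [sub_mul, hP, one_mul, sub_self]
  have e3 : P * ((1 - B2) * (1 - P) * (1 - B1)) * P
      = (P * (1 - P)) * P - P * (1 - P) * B1 * P - P * B2 * ((1 - P) * P)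
        + P * B2 * B1 * P - P * B2 * P * B1 * P := by noncomm_ring
  rw [e3, hP1, hP2]
  noncomm_ring

/-- Quantitative factorization of the determinant of a section of `(1 + H)⁻¹` when `H` is close to
a sum of two Hankel operators, one of which has alternating signs. -/
theorem norm_detP_sub_mul_le {A A1 A2 B B1 B2 : l2 →L[ℂ] l2} {a b p q : ℕ → ℝ} {S T : ℝ}
    (hA : ∀ j k, ent A j k =
      (if j = k then 1 else 0) + ((p (j + k) + (-1) ^ (j + k) * q (j + k) : ℝ) : ℂ))
    (hA1 : ∀ j k, ent A1 j k = (if j = k then 1 else 0) + ((b (j + k) : ℝ) : ℂ))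
    (hA2 : ∀ j k, ent A2 j k =
      (if j = k then 1 else 0) + (((-1) ^ (j + k) * a (j + k) : ℝ) : ℂ))
    (hB : A ∘L B = 1 ∧ B ∘L A = 1) (hB1 : A1 ∘L B1 = 1 ∧ B1 ∘L A1 = 1)
    (hB2 : A2 ∘L B2 = 1 ∧ B2 ∘L A2 = 1)
    (nB : ∀ x, ‖B x‖ ≤ ‖x‖) (nB1 : ∀ x, ‖B1 x‖ ≤ ‖x‖) (nB2 : ∀ x, ‖B2 x‖ ≤ ‖x‖)
    (ha : Antitone a) (ha0 : ∀ m, 0 ≤ a m) (hb : Antitone b) (hb0 : ∀ m, 0 ≤ b m)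
    (hT : 0 ≤ T)
    (haS : ∀ M, ∑ j ∈ Finset.range M, a j ^ 2 ≤ S) (hbS : ∀ M, ∑ j ∈ Finset.range M, b j ^ 2 ≤ S)
    (hpT : ∀ M N, ∑ j ∈ Finset.range M, ∑ k ∈ Finset.range N,
      (b (j + k) - p (j + k)) ^ 2 ≤ T ^ 2)
    (hqT : ∀ M N, ∑ j ∈ Finset.range M, ∑ k ∈ Finset.range N,
      (a (j + k) - q (j + k)) ^ 2 ≤ T ^ 2) (n : ℕ) :
    ‖detP n B - detP n B1 * detP n B2‖ ≤ Real.sqrt n * (2 * S + 2 * T) := by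
  have hS : 0 ≤ S := by simpa using haS 0
  have e1 : ∀ j k, ent (A1 - 1) j k = ((b (j + k) : ℝ) : ℂ) := fun j k => by
    rw [ent_sub, ent_one, hA1]; ring
  have e2 : ∀ j k, ent (A2 - 1) j k = (((-1) ^ (j + k) * a (j + k) : ℝ) : ℂ) := fun j k => by
    rw [ent_sub, ent_one, hA2]; ring
  have e0 : ∀ j k, ent (A - 1) j k =
      ((p (j + k) + (-1) ^ (j + k) * q (j + k) : ℝ) : ℂ) := fun j k => by
    rw [ent_sub, ent_one, hA]; ring
  have f1 : HSBound ((A1 - 1) ∘L (A2 - 1)) S := by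
    refine HSBound.of_rank_one (u := b) (v := a) (fun j k => ?_) hbS haS
    have := norm_ent_comp_sub_le (X := A1 - 1) (Y := A2 - 1) hb hb0 ha ha0
      (fun j k => ⟨(-1) ^ k, by simp, fun l => by
        rw [e1, e2, ← Complex.ofReal_mul]; congr 1; ring⟩) 0 j k
    simpa using this
  have f2 : HSBound ((A2 - 1) ∘L (A1 - 1) - (A2 - 1) ∘L proj n ∘L (A1 - 1)) S := by
    refine HSBound.of_rank_one (u := a) (v := b) (fun j k => ?_) haS hbS
    rw [ent_sub, ent_comp_proj_comp]
    exact norm_ent_comp_sub_le (X := A2 - 1) (Y := A1 - 1) ha ha0 hb hb0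
      (fun j k => ⟨(-1) ^ j, by simp, fun l => by
        rw [e1, e2, ← Complex.ofReal_mul]; congr 1; ring⟩) n j k
  have f3 : HSBound ((A1 - 1) + (A2 - 1) - (A - 1)) (2 * T) := fun M N => by
    have hle : ∀ j k, ‖ent ((A1 - 1) + (A2 - 1) - (A - 1)) j k‖ ^ 2 ≤
        2 * (b (j + k) - p (j + k)) ^ 2 + 2 * (a (j + k) - q (j + k)) ^ 2 := fun j k => by
      rw [ent_sub, ent_add, e1, e2, e0, ← Complex.ofReal_add, ← Complex.ofReal_sub,
        Complex.norm_real, Real.norm_eq_abs, sq_abs]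
      rcases neg_one_pow_eq_or ℝ (j + k) with h | h <;> rw [h]
      · nlinarith [sq_nonneg ((b (j + k) - p (j + k)) - (a (j + k) - q (j + k)))]
      · nlinarith [sq_nonneg ((b (j + k) - p (j + k)) + (a (j + k) - q (j + k)))]
    refine (Finset.sum_le_sum fun j _ => Finset.sum_le_sum fun k _ => hle j k).trans ?_
    simp only [Finset.sum_add_distrib, ← Finset.mul_sum]
    linarith [hpT M N, hqT M N]
  have hPP := norm_proj_apply_le n
  have nY : ∀ x, ‖(proj n ∘L (B2 ∘L proj n ∘L B1) ∘L proj n) x‖ ≤ ‖x‖ := fun x =>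
    (hPP _).trans ((nB2 _).trans ((hPP _).trans ((nB1 _).trans (hPP _))))
  have nX : ∀ x, ‖(proj n ∘L B ∘L proj n) x‖ ≤ ‖x‖ := fun x =>
    (hPP _).trans ((nB _).trans (hPP _))
  have n21 : ∀ x, ‖(B2 ∘L B1) x‖ ≤ ‖x‖ := fun x => (nB2 _).trans (nB1 x)
  have hres := comp_comp_comp_resolvent (P := proj n) (proj_comp_proj n) hB.2 hB1.1 hB2.1 hB2.2
  set R1 := proj n ∘L ((B ∘L ((A1 - 1) ∘L (A2 - 1))) ∘L (B2 ∘L B1)) ∘L proj n with hR1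
  set R2 := proj n ∘L ((B ∘L ((A1 - 1) + (A2 - 1) - (A - 1))) ∘L (B2 ∘L B1)) ∘L proj n with hR2
  set R3 := proj n ∘L ((B2 ∘L ((A2 - 1) ∘L (A1 - 1) - (A2 - 1) ∘L proj n ∘L (A1 - 1))) ∘L B1)
    ∘L proj n with hR3
  have g1 : HSBound R1 S := (((f1.comp_left nB).comp_right n21).comp_right hPP).comp_left hPP
  have g2 : HSBound R2 (2 * T) := (((f3.comp_left nB).comp_right n21).comp_right hPP).comp_left hPP
  have g3 : HSBound R3 S := (((f2.comp_left nB2).comp_right nB1).comp_right hPP).comp_left hPP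
  have hdiff : proj n ∘L B ∘L proj n - proj n ∘L (B2 ∘L proj n ∘L B1) ∘L proj n
      = R1 + R2 + R3 := by
    simp only [hR1, hR2, hR3, ← ContinuousLinearMap.mul_def]
    simp only [← mul_assoc] at hres ⊢
    rw [hres]
    noncomm_ring
  rw [mul_comm, ← detP_comp_proj_comp, ← detP_proj_comp_comp_proj n B,
    ← detP_proj_comp_comp_proj n (B2 ∘L proj n ∘L B1)]
  refine (norm_detP_sub_le _ _ nX nY n).trans ?_
  rw [hdiff]
  calc ∑ k ∈ Finset.range n, ‖(R1 + R2 + R3) (ee k)‖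
      ≤ ∑ k ∈ Finset.range n, (‖R1 (ee k)‖ + ‖R2 (ee k)‖ + ‖R3 (ee k)‖) :=
        Finset.sum_le_sum fun k _ => norm_add₃_le
    _ ≤ Real.sqrt n * S + Real.sqrt n * (2 * T) + Real.sqrt n * S := by
        rw [Finset.sum_add_distrib, Finset.sum_add_distrib]
        exact add_le_add (add_le_add (g1.sum_norm_le hS n) (g2.sum_norm_le (by positivity) n))
          (g3.sum_norm_le hS n)
    _ = Real.sqrt n * (2 * S + 2 * T) := by ring

/-! ### Moment sequences -/

/-- The `m`-th moment `π⁻¹ ∫ s ^ m w ds`, in the variable `s = e^{-x}`, `0 < x < L`. -/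
def mom (w : ℝ → ℝ) (L : ℝ) (m : ℕ) : ℝ :=
  1 / Real.pi * ∫ x in (0 : ℝ)..L, w x * Real.exp (-((m + 1) * x))

section mom

variable {w : ℝ → ℝ} {L : ℝ}

theorem intervalIntegrable_mul_exp (hw : IntervalIntegrable w volume 0 L) (m : ℕ) :
    IntervalIntegrable (fun x => w x * Real.exp (-((m + 1) * x))) volume 0 L :=
  hw.mul_continuousOn (by fun_prop)

theorem mom_mono {v : ℝ → ℝ} (hL : 0 ≤ L) (hv : IntervalIntegrable v volume 0 L)
    (hw : IntervalIntegrable w volume 0 L) (h : ∀ x ∈ Set.Ioo 0 L, v x ≤ w x) (m : ℕ) :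
    mom v L m ≤ mom w L m := by
  refine mul_le_mul_of_nonneg_left ?_ (by positivity)
  refine intervalIntegral.integral_mono_on_of_le_Ioo hL (intervalIntegrable_mul_exp hv m)
    (intervalIntegrable_mul_exp hw m) fun x hx => ?_
  exact mul_le_mul_of_nonneg_right (h x hx) (Real.exp_pos _).le

theorem mom_sub {v : ℝ → ℝ} (hv : IntervalIntegrable v volume 0 L)
    (hw : IntervalIntegrable w volume 0 L) (m : ℕ) :
    mom (fun x => v x - w x) L m = mom v L m - mom w L m := by
  rw [mom, mom, mom, ← mul_sub, ← intervalIntegral.integral_sub (intervalIntegrable_mul_exp hv m)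
    (intervalIntegrable_mul_exp hw m)]
  simp only [sub_mul]

theorem mom_const_mul (c : ℝ) (m : ℕ) : mom (fun x => c * w x) L m = c * mom w L m := by
  rw [mom, mom]
  simp only [mul_assoc, intervalIntegral.integral_const_mul]
  ring

theorem mom_nonneg (hL : 0 ≤ L) (h0 : ∀ x ∈ Set.Ioo 0 L, 0 ≤ w x)
    (hw : IntervalIntegrable w volume 0 L) (m : ℕ) : 0 ≤ mom w L m := by
  have := mom_mono hL (v := fun _ => 0) (by simp) hw h0 m
  simpa [mom] using this

theorem intervalIntegrable_mul_one_sub_exp (hw : IntervalIntegrable w volume 0 L) :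
    IntervalIntegrable (fun x => w x * (1 - Real.exp (-x))) volume 0 L :=
  hw.mul_continuousOn (by fun_prop)

theorem mom_sub_succ (hw : IntervalIntegrable w volume 0 L) (m : ℕ) :
    mom w L m - mom w L (m + 1) = mom (fun x => w x * (1 - Real.exp (-x))) L m := by
  rw [mom, mom, mom, ← mul_sub, ← intervalIntegral.integral_sub (intervalIntegrable_mul_exp hw m)
    (intervalIntegrable_mul_exp hw (m + 1))]
  congr 2
  funext x
  have : Real.exp (-((((m + 1 : ℕ) : ℝ) + 1) * x)) =
      Real.exp (-x) * Real.exp (-((m + 1) * x)) := by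
    rw [← Real.exp_add]
    congr 1
    push_cast
    ring
  rw [this]
  ring

theorem mul_one_sub_exp_nonneg (h0 : ∀ x ∈ Set.Ioo 0 L, 0 ≤ w x) :
    ∀ x ∈ Set.Ioo 0 L, 0 ≤ w x * (1 - Real.exp (-x)) := fun x hx =>
  mul_nonneg (h0 x hx) (by simpa using hx.1.le)

theorem antitone_mom (hL : 0 ≤ L) (h0 : ∀ x ∈ Set.Ioo 0 L, 0 ≤ w x)
    (hw : IntervalIntegrable w volume 0 L) : Antitone (mom w L) := by
  refine antitone_nat_of_succ_le fun m => ?_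
  rw [← sub_nonneg, mom_sub_succ hw]
  exact mom_nonneg hL (mul_one_sub_exp_nonneg h0) (intervalIntegrable_mul_one_sub_exp hw) m

theorem antitone_mom_sub_succ (hL : 0 ≤ L) (h0 : ∀ x ∈ Set.Ioo 0 L, 0 ≤ w x)
    (hw : IntervalIntegrable w volume 0 L) : Antitone fun m => mom w L m - mom w L (m + 1) := by
  simp only [mom_sub_succ hw]
  exact antitone_mom hL (mul_one_sub_exp_nonneg h0) (intervalIntegrable_mul_one_sub_exp hw)

theorem abs_mom_sub_mom_le {v : ℝ → ℝ} {ε : ℝ} (hL : 0 ≤ L)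
    (hv : IntervalIntegrable v volume 0 L) (hw : IntervalIntegrable w volume 0 L)
    (h : ∀ x ∈ Set.Ioo 0 L, |v x - w x| ≤ ε * (v x * (1 - Real.exp (-x)))) (m : ℕ) :
    |mom v L m - mom w L m| ≤ ε * (mom v L m - mom v L (m + 1)) := by
  have hi := (intervalIntegrable_mul_one_sub_exp hv).const_mul ε
  rw [mom_sub_succ hv, ← mom_const_mul, abs_le, ← mom_sub hv hw]
  constructor
  · have := mom_mono hL (hi.const_mul (-1)) (hv.sub hw)
      (fun x hx => by simpa using (abs_le.1 (h x hx)).1) m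
    rw [mom_const_mul] at this
    linarith
  · exact mom_mono hL (hv.sub hw) hi (fun x hx => (abs_le.1 (h x hx)).2) m

theorem hankelNonneg_mom (hL : 0 ≤ L) (h0 : ∀ x ∈ Set.Ioo 0 L, 0 ≤ w x)
    (hw : IntervalIntegrable w volume 0 L) : HankelNonneg (mom w L) := fun N x => by
  have hre : (∑ j ∈ Finset.range N, ∑ k ∈ Finset.range N,
      (starRingEnd ℂ) (x j) * (mom w L (j + k) : ℂ) * x k).re
      = 1 / Real.pi * ∫ t in (0 : ℝ)..L, ∑ j ∈ Finset.range N, ∑ k ∈ Finset.range N,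
        ((starRingEnd ℂ) (x j) * x k).re * (w t * Real.exp (-(((j + k : ℕ) + 1) * t))) := by
    rw [intervalIntegral.integral_finsetSum fun j _ => ?_, Complex.re_sum, Finset.mul_sum]
    · refine Finset.sum_congr rfl fun j _ => ?_
      rw [intervalIntegral.integral_finsetSum fun k _ => ?_, Complex.re_sum, Finset.mul_sum]
      · refine Finset.sum_congr rfl fun k _ => ?_
        rw [intervalIntegral.integral_const_mul, mul_right_comm, Complex.re_mul_ofReal, mom]
        ring
      · exact (intervalIntegrable_mul_exp hw _).const_mul _
    · have := IntervalIntegrable.sum (μ := volume) (a := 0) (b := L) (Finset.range N)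
        (f := fun k t => ((starRingEnd ℂ) (x j) * x k).re *
          (w t * Real.exp (-(((j + k : ℕ) + 1) * t))))
        fun k _ => (intervalIntegrable_mul_exp hw (j + k)).const_mul _
      simpa only [Finset.sum_fn] using this
  rw [hre]
  refine mul_nonneg (by positivity) ?_
  have hpt : ∀ t, ∑ j ∈ Finset.range N, ∑ k ∈ Finset.range N,
        ((starRingEnd ℂ) (x j) * x k).re * (w t * Real.exp (-(((j + k : ℕ) + 1) * t)))
      = w t * Real.exp (-t) *
        Complex.normSq (∑ k ∈ Finset.range N, x k * (Real.exp (-(k * t)) : ℝ)) := fun t => by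
    have h2 : ((Complex.normSq (∑ k ∈ Finset.range N, x k * (Real.exp (-(k * t)) : ℝ)) : ℝ) : ℂ)
        = ∑ j ∈ Finset.range N, ∑ k ∈ Finset.range N,
          (starRingEnd ℂ) (x j) * x k *
            ((Real.exp (-(j * t)) * Real.exp (-(k * t)) : ℝ) : ℂ) := by
      rw [Complex.normSq_eq_conj_mul_self, map_sum, Finset.sum_mul_sum]
      refine Finset.sum_congr rfl fun j _ => Finset.sum_congr rfl fun k _ => ?_
      rw [map_mul, Complex.conj_ofReal]
      push_cast
      ring
    have h3 := congrArg Complex.re h2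
    rw [Complex.ofReal_re] at h3
    rw [h3, Complex.re_sum, Finset.mul_sum]
    refine Finset.sum_congr rfl fun j _ => ?_
    rw [Complex.re_sum, Finset.mul_sum]
    refine Finset.sum_congr rfl fun k _ => ?_
    rw [Complex.re_mul_ofReal]
    have : Real.exp (-(((j + k : ℕ) + 1) * t)) =
        Real.exp (-t) * (Real.exp (-(j * t)) * Real.exp (-(k * t))) := by
      rw [← Real.exp_add, ← Real.exp_add]
      congr 1
      push_cast
      ring
    rw [this]
    ring
  simp only [hpt]
  rw [intervalIntegral.integral_of_le hL, integral_Ioc_eq_integral_Ioo]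
  refine setIntegral_nonneg measurableSet_Ioo fun t ht => ?_
  exact mul_nonneg (mul_nonneg (h0 t ht) (Real.exp_pos _).le) (Complex.normSq_nonneg _)

theorem one_div_pi_le_one : 1 / Real.pi ≤ 1 := by
  rw [div_le_one Real.pi_pos]
  linarith [Real.pi_gt_three]

theorem integral_exp_neg_succ_mul (L : ℝ) (m : ℕ) :
    ∫ x in (0 : ℝ)..L, Real.exp (-((m + 1) * x)) = (1 - Real.exp (-((m + 1) * L))) / (m + 1) := by
  have hm : (m : ℝ) + 1 ≠ 0 := by positivity
  have hd : ∀ x ∈ Set.uIcc 0 L, HasDerivAt (fun x : ℝ => -(Real.exp (-((m + 1) * x)) / (m + 1)))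
      (Real.exp (-((m + 1) * x))) x := fun x _ => by
    have := ((((hasDerivAt_id x).const_mul ((m : ℝ) + 1)).neg.exp).div_const ((m : ℝ) + 1)).neg
    refine this.congr_deriv ?_
    field_simp
    simp
  rw [intervalIntegral.integral_eq_sub_of_hasDerivAt hd
    (Continuous.intervalIntegrable (by fun_prop) _ _)]
  simp only [mul_zero, neg_zero, Real.exp_zero]
  ring

theorem mom_le_of_le_const {K : ℝ} (hL : 0 ≤ L) (hK : 0 ≤ K) (h : ∀ x ∈ Set.Ioo 0 L, w x ≤ K)
    (hw : IntervalIntegrable w volume 0 L) (m : ℕ) :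
    mom w L m ≤ K * ((1 - Real.exp (-((m + 1) * L))) / (m + 1)) := by
  refine (mom_mono hL hw (w := fun _ => K) (by simp) h m).trans ?_
  rw [mom, intervalIntegral.integral_const_mul, integral_exp_neg_succ_mul]
  refine mul_le_of_le_one_left (mul_nonneg hK (div_nonneg ?_ (by positivity))) one_div_pi_le_one
  rw [sub_nonneg, Real.exp_le_one_iff, neg_nonpos]
  positivity

end mom

theorem sum_sq_le_of_le_of_le_div {c : ℕ → ℝ} {C δ : ℝ} (hδ : 0 < δ) (h0 : ∀ m, 0 ≤ c m)
    (h1 : ∀ m, c m ≤ C * δ) (h2 : ∀ m : ℕ, c m ≤ C / (m + 1)) (M : ℕ) :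
    ∑ m ∈ Finset.range M, c m ^ 2 ≤ 4 * C ^ 2 * δ := by
  have hC : 0 ≤ C := by
    have := (h0 0).trans (h2 0)
    simpa using this
  have hd : 0 < 1 / δ := by positivity
  have hpt : ∀ m : ℕ, c m ^ 2 ≤
      4 * C ^ 2 * (1 / ((m : ℝ) + 1 / δ) - 1 / (((m + 1 : ℕ) : ℝ) + 1 / δ)) := fun m => by
    have h3 : c m * ((m : ℝ) + 1) ≤ C := (le_div_iff₀ (by positivity)).1 (h2 m)
    have h4 : c m * (1 / δ) ≤ C := by
      rw [mul_one_div]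
      exact (div_le_iff₀ hδ).2 (h1 m)
    have h5 : c m ≤ 2 * C / ((m : ℝ) + 1 + 1 / δ) := by
      rw [le_div_iff₀ (by positivity)]
      linarith
    calc c m ^ 2 ≤ (2 * C / ((m : ℝ) + 1 + 1 / δ)) ^ 2 := pow_le_pow_left₀ (h0 m) h5 2
      _ = 4 * C ^ 2 * (1 / ((m : ℝ) + 1 + 1 / δ) ^ 2) := by rw [div_pow]; ring
      _ ≤ _ := by
        refine mul_le_mul_of_nonneg_left ?_ (by positivity)
        rw [div_sub_div _ _ (by positivity) (by positivity)]
        push_cast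
        refine (div_le_div_iff₀ (by positivity) (by positivity)).2 ?_
        nlinarith [(Nat.cast_nonneg m : (0 : ℝ) ≤ m)]
  refine (Finset.sum_le_sum fun m _ => hpt m).trans ?_
  rw [← Finset.mul_sum, Finset.sum_range_sub' fun m : ℕ => 1 / ((m : ℝ) + 1 / δ)]
  refine mul_le_mul_of_nonneg_left ?_ (by positivity)
  have : (0 : ℝ) ≤ 1 / ((M : ℝ) + 1 / δ) := by positivity
  simp only [Nat.cast_zero, zero_add, one_div_one_div]
  simpa using this

/-! ### A contour integral over a half strip -/

section strip

variable {f : ℂ → ℂ} {K : ℝ → ℝ} {L : ℝ}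

/-- The open strip `0 < Im w < π`, the preimage of the upper half plane under `exp`. -/
def strip : Set ℂ := {w | w.im ∈ Set.Ioo 0 Real.pi}

theorem continuousOn_vertical (hf : DifferentiableOn ℂ f strip) (x : ℝ) :
    ContinuousOn (fun y : ℝ => f (x + y * Complex.I)) (Set.Ioo 0 Real.pi) :=
  hf.continuousOn.comp (Continuous.continuousOn (by fun_prop)) fun y hy => by simpa [strip] using hy

theorem intervalIntegrable_vertical (hf : DifferentiableOn ℂ f strip) {x M : ℝ}
    (hM : ∀ y ∈ Set.Ioo 0 Real.pi, ‖f (x + y * Complex.I)‖ ≤ M) :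
    IntervalIntegrable (fun y : ℝ => f (x + y * Complex.I)) volume 0 Real.pi := by
  rw [intervalIntegrable_iff_integrableOn_Ioo_of_le Real.pi_pos.le]
  refine IntegrableOn.of_bound (by simp)
    ((continuousOn_vertical hf x).aestronglyMeasurable measurableSet_Ioo) M ?_
  exact (ae_restrict_iff' measurableSet_Ioo).2 (Eventually.of_forall hM)

theorem tendsto_integral_shrink {g : ℝ → ℂ} (hg : IntervalIntegrable g volume 0 Real.pi) :
    Tendsto (fun ε => ∫ y in ε..(Real.pi - ε), g y) (nhdsWithin 0 (Set.Ioi 0))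
      (nhds (∫ y in (0 : ℝ)..Real.pi, g y)) := by
  have hπ := Real.pi_pos
  have hc := intervalIntegral.continuousOn_primitive_interval' hg Set.left_mem_uIcc
  rw [Set.uIcc_of_le hπ.le] at hc
  have hev : ∀ᶠ ε : ℝ in nhdsWithin 0 (Set.Ioi 0), ε ∈ Set.Ioo 0 Real.pi :=
    Ioo_mem_nhdsGT hπ
  have h0 : Tendsto (fun ε => ∫ y in (0 : ℝ)..ε, g y) (nhdsWithin 0 (Set.Ioi 0))
      (nhds (∫ y in (0 : ℝ)..0, g y)) := by
    refine Tendsto.comp (hc 0 (by simp [hπ.le])) (tendsto_nhdsWithin_iff.2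
      ⟨tendsto_nhdsWithin_of_tendsto_nhds tendsto_id, ?_⟩)
    filter_upwards [hev] with ε hε using Set.Ioo_subset_Icc_self hε
  have h1 : Tendsto (fun ε => ∫ y in (0 : ℝ)..(Real.pi - ε), g y) (nhdsWithin 0 (Set.Ioi 0))
      (nhds (∫ y in (0 : ℝ)..Real.pi, g y)) := by
    refine Tendsto.comp (hc Real.pi (by simp [hπ.le])) (tendsto_nhdsWithin_iff.2 ⟨?_, ?_⟩)
    · have : Tendsto (fun ε : ℝ => Real.pi - ε) (nhds 0) (nhds (Real.pi - 0)) :=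
        tendsto_const_nhds.sub tendsto_id
      rw [sub_zero] at this
      exact tendsto_nhdsWithin_of_tendsto_nhds this
    · filter_upwards [hev] with ε hε
      exact ⟨by linarith [hε.2], by linarith [hε.1]⟩
  have h2 := h1.sub h0
  rw [intervalIntegral.integral_same, sub_zero] at h2
  refine h2.congr' ?_
  filter_upwards [hev] with ε hε
  refine intervalIntegral.integral_interval_sub_left (hg.mono_set ?_) (hg.mono_set ?_)
  · refine Set.uIcc_subset_uIcc_left ?_
    rw [Set.uIcc_of_le hπ.le]
    exact ⟨by linarith [hε.2], by linarith [hε.1]⟩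
  · refine Set.uIcc_subset_uIcc_left ?_
    rw [Set.uIcc_of_le hπ.le]
    exact Set.Ioo_subset_Icc_self hε

theorem continuousOn_horizontal (hf : DifferentiableOn ℂ f strip) {y : ℝ}
    (hy : y ∈ Set.Ioo 0 Real.pi) : Continuous fun x : ℝ => f (x + y * Complex.I) :=
  hf.continuousOn.comp_continuous (by fun_prop) fun x => by simpa [strip] using hy

theorem tendsto_horizontal (hf : DifferentiableOn ℂ f strip) {R : ℝ} (hR : 0 ≤ R)
    (hK : ∀ x, 0 < x → x ≠ L → ∀ y ∈ Set.Ioo 0 Real.pi, ‖f (x + y * Complex.I)‖ ≤ K x)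
    (hKi : IntervalIntegrable K volume 0 R) {Y : ℝ → ℝ} {b : ℝ → ℂ}
    (hY : ∀ᶠ ε in nhdsWithin 0 (Set.Ioi 0), Y ε ∈ Set.Ioo 0 Real.pi)
    (hb : ∀ x, 0 < x → x ≠ L → Tendsto (fun ε => f (x + Y ε * Complex.I))
      (nhdsWithin 0 (Set.Ioi 0)) (nhds (b x))) :
    Tendsto (fun ε => ∫ x in (0 : ℝ)..R, f (x + Y ε * Complex.I)) (nhdsWithin 0 (Set.Ioi 0))
      (nhds (∫ x in (0 : ℝ)..R, b x)) := by
  have hne : ∀ᵐ x : ℝ, x ≠ L := by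
    simp [ae_iff]
  refine intervalIntegral.tendsto_integral_filter_of_dominated_convergence K ?_ ?_ hKi ?_
  · filter_upwards [hY] with ε hε
    exact (continuousOn_horizontal hf hε).aestronglyMeasurable
  · filter_upwards [hY] with ε hε
    filter_upwards [hne] with x hx hxI
    rw [Set.uIoc_of_le hR] at hxI
    exact hK x hxI.1 hx _ hε
  · filter_upwards [hne] with x hx hxI
    rw [Set.uIoc_of_le hR] at hxI
    exact hb x hxI.1 hx

theorem intervalIntegrable_boundary (hf : DifferentiableOn ℂ f strip) {R : ℝ} (hR : 0 ≤ R)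
    (hK : ∀ x, 0 < x → x ≠ L → ∀ y ∈ Set.Ioo 0 Real.pi, ‖f (x + y * Complex.I)‖ ≤ K x)
    (hKi : IntervalIntegrable K volume 0 R) {Y : ℝ → ℝ} {b : ℝ → ℂ}
    (hY : ∀ ε ∈ Set.Ioo 0 Real.pi, Y ε ∈ Set.Ioo 0 Real.pi)
    (hb : ∀ x, 0 < x → x ≠ L → Tendsto (fun ε => f (x + Y ε * Complex.I))
      (nhdsWithin 0 (Set.Ioi 0)) (nhds (b x))) :
    IntervalIntegrable b volume 0 R := by
  have hne : ∀ᵐ x : ℝ, x ≠ L := by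
    simp [ae_iff]
  have hne' : ∀ᵐ x ∂volume.restrict (Set.Ioc 0 R), 0 < x ∧ x ≠ L := by
    refine (ae_restrict_iff' measurableSet_Ioc).2 ?_
    filter_upwards [hne] with x hx hxI using ⟨hxI.1, hx⟩
  have he : ∀ n : ℕ, 1 / ((n : ℝ) + 1) ∈ Set.Ioo 0 Real.pi := fun n => by
    refine ⟨by positivity, lt_of_le_of_lt ?_ (by linarith [Real.pi_gt_three] : 1 < Real.pi)⟩
    rw [div_le_one (by positivity)]
    simp
  have hseq : Tendsto (fun n : ℕ => 1 / ((n : ℝ) + 1)) atTop (nhdsWithin 0 (Set.Ioi 0)) :=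
    tendsto_nhdsWithin_iff.2 ⟨tendsto_one_div_add_atTop_nhds_zero_nat,
      Eventually.of_forall fun n => (he n).1⟩
  rw [intervalIntegrable_iff_integrableOn_Ioc_of_le hR] at hKi ⊢
  refine Integrable.mono' hKi (aestronglyMeasurable_of_tendsto_ae atTop
    (f := fun (n : ℕ) (x : ℝ) => f (x + Y (1 / ((n : ℝ) + 1)) * Complex.I))
    (fun n => (continuousOn_horizontal hf (hY _ (he n))).aestronglyMeasurable) ?_) ?_
  · filter_upwards [hne'] with x hx using (hb x hx.1 hx.2).comp hseq
  · filter_upwards [hne'] with x hx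
    exact le_of_tendsto ((hb x hx.1 hx.2).comp hseq).norm
      (Eventually.of_forall fun n => hK x hx.1 hx.2 _ (hY _ (he n)))

theorem im_integral_mul_exp {b : ℝ → ℂ} {R : ℝ} (hL : 0 ≤ L) (hR : L ≤ R)
    (hb : IntervalIntegrable b volume 0 R) (hb0 : ∀ x, L < x → (b x).im = 0) (m : ℕ) :
    (∫ x in (0 : ℝ)..R, b x * (Real.exp (-((m + 1) * x)) : ℝ)).im
      = Real.pi * mom (fun x => (b x).im) L m := by
  have hbi : IntervalIntegrable (fun x => b x * (Real.exp (-((m + 1) * x)) : ℝ)) volume 0 R :=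
    hb.mul_continuousOn (Continuous.continuousOn (by fun_prop))
  have h1 := ContinuousLinearMap.intervalIntegral_comp_comm Complex.imCLM hbi
  simp only [Complex.imCLM_apply, Complex.im_mul_ofReal] at h1
  have hii : IntervalIntegrable (fun x => (b x).im * Real.exp (-((m + 1) * x))) volume 0 R := by
    have := (hbi.norm).mono_fun (g := fun x => (b x * (Real.exp (-((m + 1) * x)) : ℝ)).im)
      (Complex.continuous_im.comp_aestronglyMeasurable hbi.aestronglyMeasurable_restrict_uIoc)
      (Eventually.of_forall fun x => by
        simpa only [abs_norm, Real.norm_eq_abs] using Complex.abs_im_le_norm _)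
    simpa only [Complex.im_mul_ofReal] using this
  have hLm : L ∈ Set.uIcc 0 R := by
    rw [Set.uIcc_of_le (hL.trans hR)]
    exact ⟨hL, hR⟩
  rw [← h1, ← intervalIntegral.integral_add_adjacent_intervals
    (hii.mono_set (Set.uIcc_subset_uIcc_left hLm))
    (hii.mono_set (Set.uIcc_subset_uIcc_right hLm)), mom]
  have h2 : ∫ x in L..R, (b x).im * Real.exp (-((m + 1) * x)) = 0 := by
    refine intervalIntegral.integral_zero_ae (Eventually.of_forall fun x hx => ?_)
    rw [Set.uIoc_of_le hR] at hx
    rw [hb0 x hx.1, zero_mul]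
  rw [h2, add_zero]
  field_simp

/-- Cauchy's theorem on `[0, R] × [0, π]` for a function with boundary values. -/
theorem integral_boundary_strip (hf : DifferentiableOn ℂ f strip) {R : ℝ} (hL : 0 < L)
    (hR : L < R)
    (hK : ∀ x, 0 ≤ x → x ≠ L → ∀ y ∈ Set.Ioo 0 Real.pi, ‖f (x + y * Complex.I)‖ ≤ K x)
    (hKi : IntervalIntegrable K volume 0 R) {b t : ℝ → ℂ}
    (hb : ∀ x, 0 < x → x ≠ L → Tendsto (fun ε : ℝ => f (x + ε * Complex.I))
      (nhdsWithin 0 (Set.Ioi 0)) (nhds (b x)))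
    (ht : ∀ x, 0 < x → x ≠ L → Tendsto (fun ε : ℝ => f (x + (Real.pi - ε : ℝ) * Complex.I))
      (nhdsWithin 0 (Set.Ioi 0)) (nhds (t x))) :
    (∫ x in (0 : ℝ)..R, b x) - (∫ x in (0 : ℝ)..R, t x)
      + Complex.I * (∫ y in (0 : ℝ)..Real.pi, f (R + y * Complex.I))
      - Complex.I * (∫ y in (0 : ℝ)..Real.pi, f ((0 : ℝ) + y * Complex.I)) = 0 := by
  have hR0 : 0 ≤ R := (hL.trans hR).le
  have hev : ∀ᶠ ε : ℝ in nhdsWithin 0 (Set.Ioi 0), ε ∈ Set.Ioo 0 Real.pi :=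
    Ioo_mem_nhdsGT Real.pi_pos
  have hev' : ∀ᶠ ε : ℝ in nhdsWithin 0 (Set.Ioi 0), Real.pi - ε ∈ Set.Ioo 0 Real.pi := by
    filter_upwards [hev] with ε hε
    exact ⟨by linarith [hε.2], by linarith [hε.1]⟩
  have h1 := tendsto_horizontal hf hR0 (fun x hx => hK x hx.le) hKi hev hb
  have h2 := tendsto_horizontal hf hR0 (fun x hx => hK x hx.le) hKi hev' ht
  have h3 := tendsto_integral_shrink (intervalIntegrable_vertical hf (hK R hR0 hR.ne'))
  have h4 := tendsto_integral_shrink (intervalIntegrable_vertical hf (hK 0 le_rfl hL.ne))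
  have h5 := ((h1.sub h2).add (h3.const_mul Complex.I)).sub (h4.const_mul Complex.I)
  refine tendsto_nhds_unique h5 (tendsto_const_nhds.congr' ?_)
  filter_upwards [hev, hev'] with ε hε hε'
  have := Complex.integral_boundary_rect_eq_zero_of_differentiableOn f
    ⟨0, ε⟩ ⟨R, Real.pi - ε⟩ (hf.mono fun w hw => ?_)
  · simpa only [smul_eq_mul] using this.symm
  · exact Set.OrdConnected.uIcc_subset Set.ordConnected_Ioo hε hε' hw.2

theorem exp_eq_of_add_pi (k : ℕ) (x ε : ℝ) :
    Complex.exp (-((k : ℂ) * (x + (Real.pi - ε : ℝ) * Complex.I)))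
      = (-1) ^ k * Complex.exp (-((k : ℂ) * (x - ε * Complex.I))) := by
  have h : -((k : ℂ) * (x + (Real.pi - ε : ℝ) * Complex.I)) =
      k * (-(Real.pi * Complex.I)) + -((k : ℂ) * (x - ε * Complex.I)) := by
    push_cast
    ring
  rw [h, Complex.exp_add, Complex.exp_nat_mul, Complex.exp_neg, Complex.exp_pi_mul_I]
  norm_num

/-- The positive Fourier coefficients of the restriction to `|z| = 1` of a function on the upper
half plane, written as a function on the strip, are given by the jumps across `|z| > 1`. -/
theorem re_integral_eq_mom (hf : DifferentiableOn ℂ f strip) (hL : 0 < L) {C : ℝ}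
    (hK : ∀ x, 0 ≤ x → x ≠ L → ∀ y ∈ Set.Ioo 0 Real.pi, ‖f (x + y * Complex.I)‖ ≤ K x)
    (hKi : ∀ R, L < R → IntervalIntegrable K volume 0 R) (hKC : ∀ x, L + 1 ≤ x → K x ≤ C)
    {b t : ℝ → ℂ}
    (hb : ∀ x, 0 < x → x ≠ L → Tendsto (fun ε : ℝ => f (x + ε * Complex.I))
      (nhdsWithin 0 (Set.Ioi 0)) (nhds (b x)))
    (ht : ∀ x, 0 < x → x ≠ L → Tendsto (fun ε : ℝ => f (x + (Real.pi - ε : ℝ) * Complex.I))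
      (nhdsWithin 0 (Set.Ioi 0)) (nhds (t x)))
    (hb0 : ∀ x, L < x → (b x).im = 0) (ht0 : ∀ x, L < x → (t x).im = 0) (m : ℕ) :
    1 / Real.pi * (∫ y in (0 : ℝ)..Real.pi, f ((0 : ℝ) + y * Complex.I) *
      Complex.exp (-(((m + 1 : ℕ) : ℂ) * ((0 : ℝ) + y * Complex.I)))).re
      = mom (fun x => (b x).im) L m + (-1) ^ m * mom (fun x => (t x).im) L m := by
  have hπ := Real.pi_pos
  set E : ℂ → ℂ := fun w => Complex.exp (-(((m + 1 : ℕ) : ℂ) * w)) with hE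
  have hEn : ∀ x y : ℝ, ‖E (x + y * Complex.I)‖ = Real.exp (-((m + 1) * x)) := fun x y => by
    rw [hE, Complex.norm_exp]
    simp
  have hF : DifferentiableOn ℂ (fun w => f w * E w) strip :=
    hf.mul (Differentiable.differentiableOn (by fun_prop))
  have hKF : ∀ x, 0 ≤ x → x ≠ L → ∀ y ∈ Set.Ioo 0 Real.pi,
      ‖f (x + y * Complex.I) * E (x + y * Complex.I)‖ ≤ K x * Real.exp (-((m + 1) * x)) :=
    fun x hx hxL y hy => by
      rw [norm_mul, hEn]
      exact mul_le_mul_of_nonneg_right (hK x hx hxL y hy) (Real.exp_pos _).le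
  have hEc : Continuous E := by fun_prop
  have hbF : ∀ x, 0 < x → x ≠ L →
      Tendsto (fun ε : ℝ => f (x + ε * Complex.I) * E (x + ε * Complex.I))
        (nhdsWithin 0 (Set.Ioi 0)) (nhds (b x * (Real.exp (-((m + 1) * x)) : ℝ))) :=
    fun x hx hxL => by
      refine (hb x hx hxL).mul ?_
      have h : Continuous fun ε : ℝ => E (x + ε * Complex.I) := by fun_prop
      have h' := h.tendsto 0
      rw [show E (x + (0 : ℝ) * Complex.I) = (Real.exp (-((m + 1) * x)) : ℝ) by simp [hE]] at h'
      exact tendsto_nhdsWithin_of_tendsto_nhds h'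
  have htF : ∀ x, 0 < x → x ≠ L →
      Tendsto (fun ε : ℝ => f (x + (Real.pi - ε : ℝ) * Complex.I) *
        E (x + (Real.pi - ε : ℝ) * Complex.I)) (nhdsWithin 0 (Set.Ioi 0))
        (nhds ((-1) ^ (m + 1) * t x * (Real.exp (-((m + 1) * x)) : ℝ))) :=
    fun x hx hxL => by
      have h : Continuous fun ε : ℝ => E (x + (Real.pi - ε : ℝ) * Complex.I) := by fun_prop
      have h' := h.tendsto 0
      rw [show E (x + (Real.pi - 0 : ℝ) * Complex.I) =
        (-1) ^ (m + 1) * (Real.exp (-((m + 1) * x)) : ℝ) by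
          rw [hE]
          simp only
          rw [exp_eq_of_add_pi]
          simp] at h'
      have h2 := (ht x hx hxL).mul (tendsto_nhdsWithin_of_tendsto_nhds h')
      rwa [← mul_assoc, mul_comm (t x)] at h2
  have hI : ∀ R, L + 1 ≤ R →
      (∫ y in (0 : ℝ)..Real.pi, f ((0 : ℝ) + y * Complex.I) * E ((0 : ℝ) + y * Complex.I)).re
        - Real.pi * (mom (fun x => (b x).im) L m + (-1) ^ m * mom (fun x => (t x).im) L m)
      = (∫ y in (0 : ℝ)..Real.pi, f (R + y * Complex.I) * E (R + y * Complex.I)).re :=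
    fun R hR => by
      have hLR : L < R := by linarith
      have hR0 : 0 ≤ R := (hL.trans hLR).le
      have hbi := intervalIntegrable_boundary hf hR0 (fun x hx => hK x hx.le) (hKi R hLR)
        (fun ε hε => hε) hb
      have hti := intervalIntegrable_boundary hf hR0 (fun x hx => hK x hx.le) (hKi R hLR)
        (Y := fun ε => Real.pi - ε)
        (fun ε hε => ⟨by linarith [hε.2], by linarith [hε.1]⟩) ht
      have h := congrArg Complex.im (integral_boundary_strip hF hL hLR hKF
        ((hKi R hLR).mul_continuousOn (Continuous.continuousOn (by fun_prop))) hbF htF)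
      have e2 := im_integral_mul_exp hL.le hLR.le hti ht0 m
      simp only [mul_assoc, intervalIntegral.integral_const_mul] at h
      rw [Complex.sub_im, Complex.add_im, Complex.sub_im,
        im_integral_mul_exp hL.le hLR.le hbi hb0 m, Complex.I_mul_im, Complex.I_mul_im] at h
      have hs : ((-1 : ℂ) ^ (m + 1)) = (((-1 : ℝ) ^ (m + 1) : ℝ) : ℂ) := by push_cast; rfl
      rw [hs, Complex.im_ofReal_mul, e2] at h
      simp only [Complex.zero_im] at h
      rw [pow_succ] at h
      linarith
  have hlim : Tendsto (fun R : ℝ =>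
      (∫ y in (0 : ℝ)..Real.pi, f (R + y * Complex.I) * E (R + y * Complex.I)).re)
      atTop (nhds 0) := by
    refine squeeze_zero_norm' (a := fun R => |C| * Real.pi * Real.exp (-R)) ?_ ?_
    · filter_upwards [eventually_ge_atTop (L + 1)] with R hR
      have hR0 : 0 ≤ R := by linarith
      refine (Complex.abs_re_le_norm _).trans ?_
      have hne : ∀ᵐ y : ℝ, y ≠ Real.pi := by
        simp [ae_iff]
      refine (intervalIntegral.norm_integral_le_of_norm_le_const_ae
        (C := |C| * Real.exp (-R)) ?_).trans_eq ?_
      · filter_upwards [hne] with y hy hyI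
        rw [Set.uIoc_of_le hπ.le] at hyI
        refine (hKF R hR0 (by linarith) y ⟨hyI.1, lt_of_le_of_ne hyI.2 hy⟩).trans ?_
        refine mul_le_mul ((hKC R hR).trans (le_abs_self C)) ?_ (Real.exp_pos _).le (abs_nonneg C)
        rw [Real.exp_le_exp]
        have : 0 ≤ (m : ℝ) * R := by positivity
        linarith
      · rw [sub_zero, abs_of_pos hπ]
        ring
    · have := (Real.tendsto_exp_neg_atTop_nhds_zero).const_mul (|C| * Real.pi)
      simpa using this
  have h0 := tendsto_nhds_unique hlim (tendsto_const_nhds.congr' (f₁ := fun _ : ℝ => _)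
    ((eventually_ge_atTop (L + 1)).mono fun R hR => hI R hR))
  rw [eq_comm, sub_eq_zero] at h0
  rw [h0]
  field_simp

end strip

/-! ### The two factors on the upper half plane -/

section factors

/-- The boundary value at real `s` of the square root that is analytic on the upper half plane. -/
def realSqrt (s : ℝ) : ℂ := Real.sqrt s + Real.sqrt (-s) * Complex.I

theorem realSqrt_im (s : ℝ) : (realSqrt s).im = Real.sqrt (-s) := by
  simp [realSqrt]

theorem realSqrt_re (s : ℝ) : (realSqrt s).re = Real.sqrt s := by
  simp [realSqrt]

theorem norm_exp_mul_log (β : ℝ) {w : ℂ} (hw : w ≠ 0) :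
    ‖Complex.exp (β * Complex.log w)‖ = ‖w‖ ^ β := by
  rw [Complex.norm_exp, Complex.re_ofReal_mul, Complex.log_re, mul_comm,
    Real.rpow_def_of_pos (norm_pos_iff.2 hw)]

theorem norm_exp_half_log {w : ℂ} (hw : w ≠ 0) :
    ‖Complex.exp ((1 / 2 : ℂ) * Complex.log w)‖ = Real.sqrt ‖w‖ := by
  have := norm_exp_mul_log (1 / 2) hw
  rw [← Real.sqrt_eq_rpow] at this
  simpa using this

theorem norm_exp_neg_half_log {w : ℂ} (hw : w ≠ 0) :
    ‖Complex.exp (-(1 / 2 : ℂ) * Complex.log w)‖ = Real.sqrt ‖w⁻¹‖ := by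
  rw [neg_mul, Complex.exp_neg, norm_inv, norm_exp_half_log hw, norm_inv, Real.sqrt_inv]

theorem exp_half_log_sq {w : ℂ} (hw : w ≠ 0) :
    Complex.exp ((1 / 2 : ℂ) * Complex.log w) ^ 2 = w := by
  rw [← Complex.exp_nat_mul, ← mul_assoc]
  norm_num
  exact Complex.exp_log hw

theorem exp_neg_half_log_sq {w : ℂ} (hw : w ≠ 0) :
    Complex.exp (-(1 / 2 : ℂ) * Complex.log w) ^ 2 = w⁻¹ := by
  rw [neg_mul, Complex.exp_neg, inv_pow, exp_half_log_sq hw]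

theorem exp_half_log_pos {r : ℝ} (hr : 0 < r) :
    Complex.exp ((1 / 2 : ℂ) * Real.log r) = Real.sqrt r := by
  rw [Real.sqrt_eq_rpow, Real.rpow_def_of_pos hr]
  push_cast
  rw [mul_comm]

theorem realSqrt_of_pos {r : ℝ} (hr : 0 < r) :
    realSqrt r = Complex.exp ((1 / 2 : ℂ) * Real.log r) := by
  rw [exp_half_log_pos hr, realSqrt, Real.sqrt_eq_zero_of_nonpos (neg_nonpos.2 hr.le)]
  simp

theorem realSqrt_of_neg {r : ℝ} (hr : r < 0) :
    realSqrt r = Complex.exp ((1 / 2 : ℂ) * (Real.log (-r) + Real.pi * Complex.I)) := by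
  rw [mul_add, Complex.exp_add, exp_half_log_pos (neg_pos.2 hr), realSqrt,
    Real.sqrt_eq_zero_of_nonpos hr.le, ← mul_assoc, mul_comm (1 / 2 : ℂ), mul_one_div,
    Complex.exp_pi_div_two_mul_I]
  simp

theorem tendsto_exp_half_log {r : ℝ} (hr : r ≠ 0) :
    Tendsto (fun w => Complex.exp ((1 / 2 : ℂ) * Complex.log w))
      (nhdsWithin (r : ℂ) {w | 0 < w.im}) (nhds (realSqrt r)) := by
  rcases lt_or_gt_of_ne hr with hr | hr
  · rw [realSqrt_of_neg hr]
    have h := (Complex.tendsto_log_nhdsWithin_im_nonneg_of_re_neg_of_im_zero (z := r)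
      (by simpa using hr) (by simp)).mono_left
        (nhdsWithin_mono _ (fun w (hw : 0 < w.im) => hw.le))
    rw [Complex.norm_real, Real.norm_eq_abs, abs_of_neg hr] at h
    exact (h.const_mul _).cexp
  · rw [realSqrt_of_pos hr]
    have h := (continuousAt_clog (x := (r : ℂ)) (by simpa using hr)).tendsto.mono_left
      (nhdsWithin_le_nhds (s := {w | 0 < w.im}))
    rw [← Complex.ofReal_log hr.le] at h
    exact (h.const_mul _).cexp

theorem tendsto_exp_neg_half_log {r : ℝ} (hr : r ≠ 0) :
    Tendsto (fun w => Complex.exp (-(1 / 2 : ℂ) * Complex.log w))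
      (nhdsWithin (r : ℂ) {w | w.im < 0}) (nhds (realSqrt r⁻¹)) := by
  rcases lt_or_gt_of_ne hr with hr | hr
  · rw [realSqrt_of_neg (inv_lt_zero.2 hr), ← inv_neg, Real.log_inv]
    have h := (Complex.tendsto_log_nhdsWithin_im_neg_of_re_neg_of_im_zero (z := r)
      (by simpa using hr) (by simp))
    rw [Complex.norm_real, Real.norm_eq_abs, abs_of_neg hr] at h
    convert (h.const_mul (-(1 / 2 : ℂ))).cexp using 3
    push_cast
    ring
  · rw [realSqrt_of_pos (inv_pos.2 hr), Real.log_inv]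
    have h := (continuousAt_clog (x := (r : ℂ)) (by simpa using hr)).tendsto.mono_left
      (nhdsWithin_le_nhds (s := {w | w.im < 0}))
    rw [← Complex.ofReal_log hr.le] at h
    convert (h.const_mul (-(1 / 2 : ℂ))).cexp using 3
    push_cast
    ring

/-- The Möbius map `(z - μ) / (1 - μ z)`. -/
def mob (μ : ℝ) (z : ℂ) : ℂ := (z - μ) / (1 - μ * z)

variable {μ : ℝ}

theorem one_sub_mul_ne_zero (μ : ℝ) {z : ℂ} (hz : 0 < z.im) : 1 - μ * z ≠ 0 := fun h => by
  have h1 := congrArg Complex.im h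
  have h2 := congrArg Complex.re h
  simp at h1 h2
  rcases h1 with h1 | h1
  · simp [h1] at h2
  · exact hz.ne' h1

theorem mob_im_pos (h1 : -1 < μ) (h2 : μ < 1) {z : ℂ} (hz : 0 < z.im) : 0 < (mob μ z).im := by
  have h : (mob μ z).im = (1 - μ ^ 2) * z.im / Complex.normSq (1 - μ * z) := by
    rw [mob, Complex.div_im]
    simp
    ring
  rw [h]
  refine div_pos (mul_pos (by nlinarith) hz) (Complex.normSq_pos.2 (one_sub_mul_ne_zero μ hz))

theorem mob_ne_zero (h1 : -1 < μ) (h2 : μ < 1) {z : ℂ} (hz : 0 < z.im) : mob μ z ≠ 0 := fun h => by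
  simpa [h] using mob_im_pos h1 h2 hz

theorem differentiableAt_mob (μ : ℝ) {z : ℂ} (hz : 0 < z.im) : DifferentiableAt ℂ (mob μ) z := by
  unfold mob
  exact DifferentiableAt.div (by fun_prop) (by fun_prop) (one_sub_mul_ne_zero μ hz)

theorem mob_conj (μ : ℝ) (z : ℂ) :
    mob μ ((starRingEnd ℂ) z) = (starRingEnd ℂ) (mob μ z) := by
  simp [mob]

theorem mob_ofReal (μ t : ℝ) : mob μ t = ((t - μ) / (1 - μ * t) : ℝ) := by
  simp [mob]

theorem tendsto_mob (h1 : -1 < μ) (h2 : μ < 1) {t : ℝ} (ht : 1 - μ * t ≠ 0) :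
    Tendsto (mob μ) (nhdsWithin (t : ℂ) {w | 0 < w.im})
      (nhdsWithin (((t - μ) / (1 - μ * t) : ℝ) : ℂ) {w | 0 < w.im}) := by
  refine tendsto_nhdsWithin_iff.2 ⟨?_, ?_⟩
  · rw [← mob_ofReal]
    refine tendsto_nhdsWithin_of_tendsto_nhds (ContinuousAt.tendsto ?_)
    unfold mob
    exact ContinuousAt.div (by fun_prop) (by fun_prop) (by exact_mod_cast ht)
  · exact eventually_nhdsWithin_of_forall fun z hz => mob_im_pos h1 h2 hz

/-- The square root of `(1 - μ z) / (μ - z)`. -/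
def fac1 (μ : ℝ) (z : ℂ) : ℂ := Complex.exp (-(1 / 2 : ℂ) * Complex.log (-mob μ z))

/-- The square root of `(z + μ) / (1 + μ z)`. -/
def fac2 (μ : ℝ) (z : ℂ) : ℂ := Complex.exp ((1 / 2 : ℂ) * Complex.log (mob (-μ) z))

theorem uc_half_eq (μ : ℝ) (z : ℂ) : uc (1 / 2) ((-z - μ) / (1 + μ * z)) = fac2 μ z := by
  rw [uc, fac2, mob, ← neg_div]
  congr 4
  · push_cast
    ring
  · push_cast
    ring

variable (h0 : 0 < μ) (h1 : μ < 1) {z : ℂ} (hz : 0 < z.im)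

include h0 h1

theorem differentiableAt_fac1 (hz : 0 < z.im) : DifferentiableAt ℂ (fac1 μ) z := by
  have hm := mob_im_pos (by linarith) h1 hz
  unfold fac1
  refine ((DifferentiableAt.clog (differentiableAt_mob μ hz).fun_neg ?_).const_mul _).cexp
  exact Complex.mem_slitPlane_iff.2 (Or.inr (by simpa using hm.ne'))

theorem differentiableAt_fac2 (hz : 0 < z.im) : DifferentiableAt ℂ (fac2 μ) z := by
  have hm := mob_im_pos (μ := -μ) (by linarith) (by linarith) hz
  unfold fac2
  refine ((DifferentiableAt.clog (differentiableAt_mob (-μ) hz) ?_).const_mul _).cexp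
  exact Complex.mem_slitPlane_iff.2 (Or.inr hm.ne')

theorem tendsto_fac1 {t : ℝ} (ht : 1 - μ * t ≠ 0) (ht' : t - μ ≠ 0) :
    Tendsto (fac1 μ) (nhdsWithin (t : ℂ) {w | 0 < w.im})
      (nhds (realSqrt (-((1 - μ * t) / (t - μ))))) := by
  have h := tendsto_mob (μ := μ) (by linarith) h1 ht
  have h2 : Tendsto (fun z => -mob μ z) (nhdsWithin (t : ℂ) {w | 0 < w.im})
      (nhdsWithin ((-((t - μ) / (1 - μ * t)) : ℝ) : ℂ) {w | w.im < 0}) := by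
    refine tendsto_nhdsWithin_iff.2 ⟨?_, ?_⟩
    · rw [Complex.ofReal_neg]
      exact (tendsto_nhdsWithin_iff.1 h).1.neg
    · filter_upwards [(tendsto_nhdsWithin_iff.1 h).2] with z hz
      simpa using hz
  have h3 := (tendsto_exp_neg_half_log (neg_ne_zero.2 (div_ne_zero ht' ht))).comp h2
  rwa [inv_neg, inv_div] at h3

theorem tendsto_fac2 {t : ℝ} (ht : 1 + μ * t ≠ 0) (ht' : t + μ ≠ 0) :
    Tendsto (fac2 μ) (nhdsWithin (t : ℂ) {w | 0 < w.im})
      (nhds (realSqrt ((t + μ) / (1 + μ * t)))) := by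
  have h := tendsto_mob (μ := -μ) (t := t) (by linarith) (by linarith)
    (by rwa [neg_mul, sub_neg_eq_add])
  rw [neg_mul, sub_neg_eq_add, sub_neg_eq_add] at h
  exact (tendsto_exp_half_log (div_ne_zero ht' ht)).comp h

theorem fac1_conj (hz : 0 < z.im) :
    fac1 μ ((starRingEnd ℂ) z) = (starRingEnd ℂ) (fac1 μ z) := by
  have hm := mob_im_pos (by linarith) h1 hz
  have ha : (-mob μ z).arg ≠ Real.pi := by
    refine (Complex.arg_lt_pi_iff.2 (Or.inr ?_)).ne
    simpa using hm.ne'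
  rw [fac1, mob_conj, ← map_neg, Complex.log_conj _ ha, fac1, ← Complex.exp_conj]
  simp [Complex.conj_ofNat]

theorem fac2_conj (hz : 0 < z.im) :
    fac2 μ ((starRingEnd ℂ) z) = (starRingEnd ℂ) (fac2 μ z) := by
  have hm := mob_im_pos (μ := -μ) (by linarith) (by linarith) hz
  have ha : (mob (-μ) z).arg ≠ Real.pi := (Complex.arg_lt_pi_iff.2 (Or.inr hm.ne')).ne
  rw [fac2, mob_conj, Complex.log_conj _ ha, fac2, ← Complex.exp_conj]
  simp [Complex.conj_ofNat]

theorem fac1_mul_fac2_im_pos (hz : 0 < z.im) : 0 < (fac1 μ z * fac2 μ z).im := by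
  have hm1 := mob_im_pos (by linarith) h1 hz
  have hm2 := mob_im_pos (μ := -μ) (by linarith) (by linarith) hz
  have a1 : (-mob μ z).arg < 0 := Complex.arg_neg_iff.2 (by simpa using hm1)
  have a2 := Complex.neg_pi_lt_arg (-mob μ z)
  have a3 : 0 ≤ (mob (-μ) z).arg := Complex.arg_nonneg_iff.2 hm2.le
  have a4 := Complex.arg_le_pi (mob (-μ) z)
  rw [fac1, fac2, ← Complex.exp_add, Complex.exp_im]
  refine mul_pos (Real.exp_pos _) ?_
  have e : (-(1 / 2 : ℂ) * Complex.log (-mob μ z) + 1 / 2 * Complex.log (mob (-μ) z)).im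
      = -(1 / 2) * (-mob μ z).arg + 1 / 2 * (mob (-μ) z).arg := by
    have e1 : (-(1 / 2 : ℂ)) = ((-(1 / 2) : ℝ) : ℂ) := by push_cast; rfl
    have e2 : (1 / 2 : ℂ) = ((1 / 2 : ℝ) : ℂ) := by push_cast; rfl
    rw [e1, e2, Complex.add_im, Complex.im_ofReal_mul, Complex.im_ofReal_mul, Complex.log_im,
      Complex.log_im]
  rw [e]
  exact Real.sin_pos_of_pos_of_lt_pi (by linarith) (by linarith)

theorem norm_fac1_le_one (hz : 0 < z.im) (hz1 : 1 ≤ ‖z‖) : ‖fac1 μ z‖ ≤ 1 := by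
  have hm := mob_ne_zero (μ := μ) (by linarith) h1 hz
  rw [fac1, norm_exp_neg_half_log (neg_ne_zero.2 hm), Real.sqrt_le_one, norm_inv, norm_neg,
    mob, norm_div, inv_div]
  refine div_le_one_of_le₀ ?_ (norm_nonneg _)
  rw [← sq_le_sq₀ (norm_nonneg _) (norm_nonneg _), Complex.sq_norm, Complex.sq_norm]
  have hs : 1 ≤ Complex.normSq z := by
    rw [← Complex.sq_norm]
    nlinarith
  rw [Complex.normSq_apply] at hs
  rw [Complex.normSq_apply, Complex.normSq_apply]
  simp
  nlinarith [mul_nonneg (sub_nonneg.2 hs) (by nlinarith : 0 ≤ 1 - μ ^ 2)]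

theorem norm_fac2_le (hz : 0 < z.im) (hz1 : 1 ≤ ‖z‖) (hne : μ * ‖z‖ ≠ 1) :
    ‖fac2 μ z‖ ≤ Real.sqrt (2 * ‖z‖ / |μ * ‖z‖ - 1|) := by
  have hm := mob_ne_zero (μ := -μ) (by linarith) (by linarith) hz
  rw [fac2, norm_exp_half_log hm, mob, norm_div]
  refine Real.sqrt_le_sqrt (div_le_div₀ (by positivity) ?_ (abs_pos.2 (sub_ne_zero.2 hne)) ?_)
  · refine (norm_sub_le _ _).trans ?_
    rw [Complex.norm_real, norm_neg, Real.norm_eq_abs, abs_of_pos h0]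
    linarith
  · have h := abs_norm_sub_norm_le (((-μ : ℝ) : ℂ) * z) 1
    rw [norm_mul, Complex.norm_real, norm_neg, Real.norm_eq_abs, abs_of_pos h0, norm_one,
      norm_sub_rev] at h
    exact h

end factors

/-! ### Fourier coefficients as moments -/

section coefficients

theorem exp_im_pos_of_mem_strip {w : ℂ} (hw : w ∈ strip) : 0 < (Complex.exp w).im := by
  rw [Complex.exp_im]
  exact mul_pos (Real.exp_pos _) (Real.sin_pos_of_pos_of_lt_pi hw.1 hw.2)

theorem mem_strip {x y : ℝ} (hy : y ∈ Set.Ioo 0 Real.pi) : (x + y * Complex.I : ℂ) ∈ strip := by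
  simpa [strip] using hy

theorem norm_exp_add_mul_I (x y : ℝ) : ‖Complex.exp (x + y * Complex.I)‖ = Real.exp x := by
  simp [Complex.norm_exp]

theorem tendsto_exp_bottom (x : ℝ) :
    Tendsto (fun ε : ℝ => Complex.exp (x + ε * Complex.I)) (nhdsWithin 0 (Set.Ioi 0))
      (nhdsWithin ((Real.exp x : ℝ) : ℂ) {w | 0 < w.im}) := by
  refine tendsto_nhdsWithin_iff.2 ⟨tendsto_nhdsWithin_of_tendsto_nhds ?_, ?_⟩
  · have h : Continuous fun ε : ℝ => Complex.exp (x + ε * Complex.I) := by fun_prop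
    simpa using h.tendsto 0
  · filter_upwards [Ioo_mem_nhdsGT Real.pi_pos] with ε hε
    exact exp_im_pos_of_mem_strip (mem_strip hε)

theorem tendsto_exp_top (x : ℝ) :
    Tendsto (fun ε : ℝ => Complex.exp (x + (Real.pi - ε : ℝ) * Complex.I))
      (nhdsWithin 0 (Set.Ioi 0)) (nhdsWithin ((-Real.exp x : ℝ) : ℂ) {w | 0 < w.im}) := by
  refine tendsto_nhdsWithin_iff.2 ⟨tendsto_nhdsWithin_of_tendsto_nhds ?_, ?_⟩
  · have h : Continuous fun ε : ℝ => Complex.exp (x + (Real.pi - ε : ℝ) * Complex.I) := by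
      fun_prop
    have h' := h.tendsto 0
    rw [sub_zero, Complex.exp_add, Complex.exp_pi_mul_I] at h'
    simpa using h'
  · filter_upwards [Ioo_mem_nhdsGT Real.pi_pos] with ε hε
    exact exp_im_pos_of_mem_strip (mem_strip ⟨by linarith [hε.2], by linarith [hε.1]⟩)

theorem fc_eq_re {ψ : ℝ → ℂ} {G : ℝ → ℂ} (hG : IntervalIntegrable G volume 0 Real.pi)
    (hψ : ∀ θ ∈ Set.Ioo 0 Real.pi, ψ θ = G θ)
    (hs : ∀ θ ∈ Set.Ioo 0 Real.pi, ψ (2 * Real.pi - θ) = (starRingEnd ℂ) (ψ θ)) (k : ℤ) :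
    fc ψ k = ((1 / Real.pi * (∫ θ in (0 : ℝ)..Real.pi,
      G θ * Complex.exp (-(Complex.I * k * θ))).re : ℝ) : ℂ) := by
  have hπ := Real.pi_pos
  set H : ℝ → ℂ := fun θ => ψ θ * Complex.exp (-(Complex.I * k * θ)) with hH
  have hne : ∀ᵐ θ : ℝ, θ ≠ Real.pi := by simp [ae_iff]
  have hGi : IntervalIntegrable (fun θ => G θ * Complex.exp (-(Complex.I * k * θ))) volume 0
      Real.pi := hG.mul_continuousOn (Continuous.continuousOn (by fun_prop))
  have hHG : ∀ᵐ θ : ℝ, θ ∈ Set.uIoc 0 Real.pi →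
      G θ * Complex.exp (-(Complex.I * k * θ)) = H θ := by
    filter_upwards [hne] with θ hθ hI
    rw [Set.uIoc_of_le hπ.le] at hI
    rw [hH]
    simp only
    rw [hψ θ ⟨hI.1, lt_of_le_of_ne hI.2 hθ⟩]
  have hHi : IntervalIntegrable H volume 0 Real.pi :=
    hGi.congr_ae ((ae_restrict_iff' measurableSet_uIoc).2 hHG)
  have hHs : ∀ᵐ θ : ℝ, θ ∈ Set.uIoc 0 Real.pi →
      (starRingEnd ℂ) (H θ) = H (2 * Real.pi - θ) := by
    filter_upwards [hne] with θ hθ hI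
    rw [Set.uIoc_of_le hπ.le] at hI
    rw [hH]
    simp only
    rw [hs θ ⟨hI.1, lt_of_le_of_ne hI.2 hθ⟩, map_mul, ← Complex.exp_conj]
    congr 1
    have e : -(Complex.I * k * ((2 * Real.pi - θ : ℝ) : ℂ)) =
        Complex.I * k * θ + (-k : ℤ) * (2 * Real.pi * Complex.I) := by
      push_cast
      ring
    rw [e, Complex.exp_add, Complex.exp_int_mul_two_pi_mul_I, mul_one]
    simp
  have hci : IntervalIntegrable (fun θ => (starRingEnd ℂ) (H θ)) volume 0 Real.pi := by
    rw [intervalIntegrable_iff] at hHi ⊢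
    exact (Complex.conjCLE : ℂ →L[ℝ] ℂ).integrable_comp hHi
  have hri : IntervalIntegrable (fun θ => H (2 * Real.pi - θ)) volume 0 Real.pi :=
    hci.congr_ae ((ae_restrict_iff' measurableSet_uIoc).2 hHs)
  have hri' : IntervalIntegrable H volume Real.pi (2 * Real.pi) := by
    have := (hri.comp_sub_left (2 * Real.pi)).symm
    simp only [sub_sub_cancel, sub_zero] at this
    rwa [show 2 * Real.pi - Real.pi = Real.pi by ring] at this
  have h2 : ∫ θ in Real.pi..(2 * Real.pi), H θ = (starRingEnd ℂ) (∫ θ in (0:ℝ)..Real.pi, H θ) := by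
    have := intervalIntegral.integral_comp_sub_left (a := 0) (b := Real.pi) H (2 * Real.pi)
    rw [sub_zero, show 2 * Real.pi - Real.pi = Real.pi by ring] at this
    rw [← this, ← intervalIntegral.integral_congr_ae hHs, intervalIntegral.integral_of_le hπ.le,
      intervalIntegral.integral_of_le hπ.le, integral_conj]
  rw [fc, ← intervalIntegral.integral_add_adjacent_intervals hHi hri', h2, Complex.add_conj,
    intervalIntegral.integral_congr_ae hHG]
  push_cast
  field_simp

variable {μ : ℝ}

theorem mul_exp_neg_log (h0 : 0 < μ) (x : ℝ) : μ * Real.exp x = Real.exp (x - -Real.log μ) := by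
  rw [sub_neg_eq_add, Real.exp_add, Real.exp_log h0, mul_comm]

theorem mul_abs_sub_le (h0 : 0 < μ) (h1 : μ < 1) {x : ℝ} (hx : 0 ≤ x) :
    μ * |x - -Real.log μ| ≤ |μ * Real.exp x - 1| := by
  rw [mul_exp_neg_log h0]
  set t := x - -Real.log μ with ht
  have ht' := Real.add_one_le_exp t
  rcases le_total 0 t with h | h
  · rw [abs_of_nonneg h, abs_of_nonneg (by linarith)]
    nlinarith
  · rw [abs_of_nonpos h, abs_of_nonpos (by linarith [Real.exp_le_one_iff.2 h])]
    have e1 : μ ≤ Real.exp t := by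
      rw [← Real.log_le_iff_le_exp h0]
      linarith
    have e2 := Real.add_one_le_exp (-t)
    have e3 : Real.exp t * Real.exp (-t) = 1 := by rw [← Real.exp_add]; simp
    nlinarith [Real.exp_pos t, mul_le_mul_of_nonneg_left e2 (Real.exp_pos t).le]

theorem intervalIntegrable_abs_rpow (L R : ℝ) (hL : 0 ≤ L) (hR : L ≤ R) :
    IntervalIntegrable (fun x => |x - L| ^ (-(1 / 2) : ℝ)) volume 0 R := by
  have h : ∀ a b : ℝ, IntervalIntegrable (fun x : ℝ => x ^ (-(1 / 2) : ℝ)) volume a b :=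
    fun a b => intervalIntegral.intervalIntegrable_rpow' (by norm_num)
  refine IntervalIntegrable.trans (b := L) ?_ ?_
  · have := (h L 0).comp_sub_left L
    simp only [sub_self, sub_zero] at this
    refine this.congr fun x hx => ?_
    rw [Set.uIoc_of_le hL] at hx
    rw [abs_sub_comm, abs_of_nonneg (by linarith [hx.2])]
  · have := (h 0 (R - L)).comp_sub_right L
    simp only [zero_add, sub_add_cancel] at this
    refine this.congr fun x hx => ?_
    rw [Set.uIoc_of_le hR] at hx
    rw [abs_of_nonneg (by linarith [hx.1])]

theorem sqrt_div_le (h0 : 0 < μ) (h1 : μ < 1) {x R : ℝ} (hx : 0 ≤ x) (hR : x ≤ R) :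
    Real.sqrt (2 * Real.exp x / |μ * Real.exp x - 1|)
      ≤ Real.sqrt (2 * Real.exp R / μ) * |x - -Real.log μ| ^ (-(1 / 2) : ℝ) := by
  by_cases hxL : x - -Real.log μ = 0
  · have : μ * Real.exp x - 1 = 0 := by rw [mul_exp_neg_log h0, hxL]; simp
    rw [this]
    simp only [abs_zero, div_zero, Real.sqrt_zero]
    positivity
  have hp : 0 < |x - -Real.log μ| := abs_pos.2 hxL
  rw [Real.rpow_neg hp.le, ← Real.sqrt_eq_rpow, ← Real.sqrt_inv, ← Real.sqrt_mul (by positivity)]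
  refine Real.sqrt_le_sqrt ?_
  rw [div_mul_eq_mul_div, ← div_eq_mul_inv, div_div, mul_comm _ μ]
  refine div_le_div₀ (by positivity) ?_ (by positivity) (mul_abs_sub_le h0 h1 hx)
  have := Real.exp_le_exp.2 hR
  linarith

theorem intervalIntegrable_sqrt_div (h0 : 0 < μ) (h1 : μ < 1) {R : ℝ} (hR : -Real.log μ ≤ R) :
    IntervalIntegrable (fun x => Real.sqrt (2 * Real.exp x / |μ * Real.exp x - 1|)) volume 0 R := by
  have hL : 0 ≤ -Real.log μ := by linarith [Real.log_neg h0 h1]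
  refine ((intervalIntegrable_abs_rpow _ R hL hR).const_mul
    (Real.sqrt (2 * Real.exp R / μ))).mono_fun ?_ ?_
  · exact (by fun_prop : Measurable fun x : ℝ =>
      Real.sqrt (2 * Real.exp x / |μ * Real.exp x - 1|)).aestronglyMeasurable
  · refine (ae_restrict_iff' measurableSet_uIoc).2 (Eventually.of_forall fun x hx => ?_)
    rw [Set.uIoc_of_le (hL.trans hR)] at hx
    simp only
    rw [Real.norm_of_nonneg (Real.sqrt_nonneg _), Real.norm_of_nonneg (by positivity)]
    exact sqrt_div_le h0 h1 hx.1.le hx.2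

theorem sqrt_div_le_const (h0 : 0 < μ) {x : ℝ} (hx : -Real.log μ + 1 ≤ x) :
    Real.sqrt (2 * Real.exp x / |μ * Real.exp x - 1|) ≤ Real.sqrt (4 / μ) := by
  refine Real.sqrt_le_sqrt ?_
  have h2 : 2 ≤ μ * Real.exp x := by
    rw [mul_exp_neg_log h0]
    linarith [Real.add_one_le_exp (x - -Real.log μ)]
  rw [abs_of_nonneg (by linarith), div_le_div_iff₀ (by linarith) h0]
  linarith

/-- Fourier coefficients of a function given on the upper half circle by a function `F` on the
upper half plane with boundary values `V` on the real axis. -/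
theorem fc_eq_mom (h0 : 0 < μ) (h1 : μ < 1) {F : ℂ → ℂ} {V : ℝ → ℂ} {ψ : ℝ → ℂ}
    (hF : ∀ z : ℂ, 0 < z.im → DifferentiableAt ℂ F z)
    (hK : ∀ z : ℂ, 0 < z.im → 1 ≤ ‖z‖ → μ * ‖z‖ ≠ 1 →
      ‖F z‖ ≤ 2 + Real.sqrt (2 * ‖z‖ / |μ * ‖z‖ - 1|))
    (hV : ∀ t : ℝ, 1 < |t| → μ * |t| ≠ 1 →
      Tendsto F (nhdsWithin (t : ℂ) {w | 0 < w.im}) (nhds (V t)))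
    (hV0 : ∀ t : ℝ, 1 < μ * |t| → (V t).im = 0)
    (hψ : ∀ θ ∈ Set.Ioo 0 Real.pi, ψ θ = F (Complex.exp (Complex.I * θ)))
    (hs : ∀ θ ∈ Set.Ioo 0 Real.pi, ψ (2 * Real.pi - θ) = (starRingEnd ℂ) (ψ θ)) (m : ℕ) :
    fc ψ (m + 1) = ((mom (fun x => (V (Real.exp x)).im) (-Real.log μ) m +
      (-1) ^ m * mom (fun x => (V (-Real.exp x)).im) (-Real.log μ) m : ℝ) : ℂ) := by
  have hL : 0 < -Real.log μ := by linarith [Real.log_neg h0 h1]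
  have hne : ∀ x, x ≠ -Real.log μ → μ * Real.exp x ≠ 1 := fun x hx h => by
    rw [mul_exp_neg_log h0, Real.exp_eq_one_iff, sub_eq_zero] at h
    exact hx h
  have hlt : ∀ x, -Real.log μ < x → 1 < μ * |Real.exp x| := fun x hx => by
    rw [abs_of_pos (Real.exp_pos x), mul_exp_neg_log h0, Real.one_lt_exp_iff]
    linarith
  have hf : DifferentiableOn ℂ (fun w => F (Complex.exp w)) strip := fun w hw =>
    ((hF _ (exp_im_pos_of_mem_strip hw)).comp w Complex.differentiableAt_exp
      ).differentiableWithinAt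
  have hKf : ∀ x : ℝ, 0 ≤ x → x ≠ -Real.log μ → ∀ y ∈ Set.Ioo 0 Real.pi,
      ‖F (Complex.exp (x + y * Complex.I))‖ ≤
        2 + Real.sqrt (2 * Real.exp x / |μ * Real.exp x - 1|) := fun x hx hxL y hy => by
    have := hK (Complex.exp (x + y * Complex.I)) (exp_im_pos_of_mem_strip (mem_strip hy))
    rw [norm_exp_add_mul_I] at this
    exact this (Real.one_le_exp hx) (hne x hxL)
  have hb : ∀ x : ℝ, 0 < x → x ≠ -Real.log μ →
      Tendsto (fun ε : ℝ => F (Complex.exp (x + ε * Complex.I)))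
        (nhdsWithin 0 (Set.Ioi 0)) (nhds (V (Real.exp x))) := fun x hx hxL =>
    (hV _ (by simpa using hx) (by simpa using hne x hxL)).comp (tendsto_exp_bottom x)
  have ht : ∀ x : ℝ, 0 < x → x ≠ -Real.log μ →
      Tendsto (fun ε : ℝ => F (Complex.exp (x + (Real.pi - ε : ℝ) * Complex.I)))
        (nhdsWithin 0 (Set.Ioi 0)) (nhds (V (-Real.exp x))) := fun x hx hxL =>
    (hV _ (by simpa using hx) (by simpa using hne x hxL)).comp (tendsto_exp_top x)
  have key := re_integral_eq_mom hf hL hKf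
    (fun R hR => intervalIntegrable_const.add (intervalIntegrable_sqrt_div h0 h1 hR.le))
    (C := 2 + Real.sqrt (4 / μ))
    (fun x hx => by linarith [sqrt_div_le_const h0 hx]) hb ht
    (fun x hx => hV0 _ (hlt x hx)) (fun x hx => hV0 _ (by rw [abs_neg]; exact hlt x hx)) m
  rw [← key, fc_eq_re (intervalIntegrable_vertical hf (hKf 0 le_rfl hL.ne)) (fun θ hθ => ?_) hs]
  · congr 4
    funext y
    congr 2
    push_cast
    ring
  · rw [hψ θ hθ]
    congr 2
    push_cast
    ring

end coefficients

/-! ### The three symbols -/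

section symbols

variable {μ : ℝ}

/-- The weight of the moments giving the coefficients of `ψ⁽¹⁾`. -/
def wtB (μ x : ℝ) : ℝ := Real.sqrt ((1 - μ * Real.exp x) / (Real.exp x - μ))

/-- The weight of the moments giving the coefficients of `ψ⁽⁻¹⁾`. -/
def wtA (μ x : ℝ) : ℝ := Real.sqrt ((Real.exp x - μ) / (1 - μ * Real.exp x))

/-- The ratio between the weights of `ψ` and those of `ψ⁽¹⁾`, `ψ⁽⁻¹⁾`. -/
def wtR (μ x : ℝ) : ℝ := Real.sqrt ((Real.exp x + μ) / (1 + μ * Real.exp x))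

theorem exp_I_mul_im_pos {θ : ℝ} (hθ : θ ∈ Set.Ioo 0 Real.pi) :
    0 < (Complex.exp (Complex.I * θ)).im := by
  rw [mul_comm, Complex.exp_ofReal_mul_I_im]
  exact Real.sin_pos_of_pos_of_lt_pi hθ.1 hθ.2

theorem exp_I_mul_two_pi_sub (θ : ℝ) :
    Complex.exp (Complex.I * (2 * Real.pi - θ : ℝ)) =
      (starRingEnd ℂ) (Complex.exp (Complex.I * θ)) := by
  rw [← Complex.exp_conj, show Complex.I * ((2 * Real.pi - θ : ℝ) : ℂ) =
    -(Complex.I * θ) + 2 * Real.pi * Complex.I by push_cast; ring, Complex.exp_add,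
    Complex.exp_two_pi_mul_I]
  simp

/-- The boundary values of `fac1`. -/
def bdry1 (μ t : ℝ) : ℂ := realSqrt (-((1 - μ * t) / (t - μ)))

/-- The boundary values of `fac2`. -/
def bdry2 (μ t : ℝ) : ℂ := realSqrt ((t + μ) / (1 + μ * t))

theorem bdry1_exp_im (x : ℝ) : (bdry1 μ (Real.exp x)).im = wtB μ x := by
  rw [bdry1, realSqrt_im, neg_neg, wtB]

theorem bdry2_neg_exp_im (x : ℝ) : (bdry2 μ (-Real.exp x)).im = wtA μ x := by
  rw [bdry2, realSqrt_im, wtA, ← neg_div]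
  congr 2 <;> ring

theorem bdry2_exp_re (x : ℝ) : (bdry2 μ (Real.exp x)).re = wtR μ x := by
  rw [bdry2, realSqrt_re, wtR]

theorem bdry1_neg_exp_re (x : ℝ) : (bdry1 μ (-Real.exp x)).re = (wtR μ x)⁻¹ := by
  rw [bdry1, realSqrt_re, wtR, ← Real.sqrt_inv, inv_div, ← div_neg]
  congr 2 <;> ring

variable (h0 : 0 < μ) (h1 : μ < 1)

include h0

theorem bdry1_neg_exp_im (x : ℝ) : (bdry1 μ (-Real.exp x)).im = 0 := by
  have := Real.exp_pos x
  have := mul_pos h0 (Real.exp_pos x)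
  rw [bdry1, realSqrt_im, neg_neg]
  exact Real.sqrt_eq_zero_of_nonpos (div_nonpos_of_nonneg_of_nonpos (by linarith) (by linarith))

theorem bdry2_exp_im (x : ℝ) : (bdry2 μ (Real.exp x)).im = 0 := by
  have := Real.exp_pos x
  rw [bdry2, realSqrt_im]
  refine Real.sqrt_eq_zero_of_nonpos ?_
  rw [neg_nonpos]
  positivity

include h1

theorem bdry1_im_eq_zero {t : ℝ} (ht : 1 < μ * |t|) : (bdry1 μ t).im = 0 := by
  rw [bdry1, realSqrt_im, neg_neg]
  refine Real.sqrt_eq_zero_of_nonpos ?_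
  rcases le_total 0 t with h | h
  · rw [abs_of_nonneg h] at ht
    exact div_nonpos_of_nonpos_of_nonneg (by linarith) (by nlinarith)
  · rw [abs_of_nonpos h] at ht
    exact div_nonpos_of_nonneg_of_nonpos (by linarith) (by linarith)

theorem bdry2_im_eq_zero {t : ℝ} (ht : 1 < μ * |t|) : (bdry2 μ t).im = 0 := by
  rw [bdry2, realSqrt_im]
  refine Real.sqrt_eq_zero_of_nonpos ?_
  rw [neg_nonpos]
  rcases le_total 0 t with h | h
  · positivity
  · rw [abs_of_nonpos h] at ht
    exact div_nonneg_of_nonpos (by nlinarith) (by linarith)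

theorem tendsto_fac1_bdry1 {t : ℝ} (ht : 1 < |t|) (ht' : μ * |t| ≠ 1) :
    Tendsto (fac1 μ) (nhdsWithin (t : ℂ) {w | 0 < w.im}) (nhds (bdry1 μ t)) := by
  refine tendsto_fac1 h0 h1 ?_ ?_
  · rcases le_total 0 t with h | h
    · rw [abs_of_nonneg h] at ht'
      exact fun e => ht' (by linarith)
    · nlinarith
  · rcases le_total 0 t with h | h
    · rw [abs_of_nonneg h] at ht
      linarith
    · linarith

theorem tendsto_fac2_bdry2 {t : ℝ} (ht : 1 < |t|) (ht' : μ * |t| ≠ 1) :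
    Tendsto (fac2 μ) (nhdsWithin (t : ℂ) {w | 0 < w.im}) (nhds (bdry2 μ t)) := by
  refine tendsto_fac2 h0 h1 ?_ ?_
  · rcases le_total 0 t with h | h
    · positivity
    · rw [abs_of_nonpos h] at ht'
      exact fun e => ht' (by linarith)
  · rcases le_total 0 t with h | h
    · positivity
    · rw [abs_of_nonpos h] at ht
      linarith

theorem fc_symbol1 {ψ : ℝ → ℂ} (hψ : ∀ θ : ℝ, ψ θ =
      uc (-(1/2)) ((Complex.exp (Complex.I * θ) - μ) /
        (1 - μ * Complex.exp (Complex.I * θ))) - 1) (m : ℕ) :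
    fc ψ (m + 1) = ((mom (wtB μ) (-Real.log μ) m : ℝ) : ℂ) := by
  have hψ' : ∀ θ : ℝ, ψ θ = fac1 μ (Complex.exp (Complex.I * θ)) - 1 := hψ
  rw [fc_eq_mom h0 h1 (F := fun z => fac1 μ z - 1) (V := fun t => bdry1 μ t - 1)
    (fun z hz => (differentiableAt_fac1 h0 h1 hz).sub_const 1) (fun z hz hz1 _ => ?_)
    (fun t ht ht' => (tendsto_fac1_bdry1 h0 h1 ht ht').sub_const 1) (fun t ht => ?_)
    (fun θ _ => hψ' θ) (fun θ hθ => ?_)]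
  · simp [bdry1_neg_exp_im h0, bdry1_exp_im, mom]
  · refine (norm_sub_le _ _).trans ?_
    have := norm_fac1_le_one h0 h1 hz hz1
    rw [norm_one]
    linarith [Real.sqrt_nonneg (2 * ‖z‖ / |μ * ‖z‖ - 1|)]
  · simp [bdry1_im_eq_zero h0 h1 ht]
  · rw [hψ', hψ', exp_I_mul_two_pi_sub, fac1_conj h0 h1 (exp_I_mul_im_pos hθ)]
    simp

theorem fc_symbol2 {ψ : ℝ → ℂ} (hψ : ∀ θ : ℝ, ψ θ =
      uc (1/2) ((-Complex.exp (Complex.I * θ) - μ) /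
        (1 + μ * Complex.exp (Complex.I * θ))) - 1) (m : ℕ) :
    fc ψ (m + 1) = (((-1) ^ m * mom (wtA μ) (-Real.log μ) m : ℝ) : ℂ) := by
  have hψ' : ∀ θ : ℝ, ψ θ = fac2 μ (Complex.exp (Complex.I * θ)) - 1 := fun θ => by
    rw [hψ, uc_half_eq]
  rw [fc_eq_mom h0 h1 (F := fun z => fac2 μ z - 1) (V := fun t => bdry2 μ t - 1)
    (fun z hz => (differentiableAt_fac2 h0 h1 hz).sub_const 1) (fun z hz hz1 hz2 => ?_)
    (fun t ht ht' => (tendsto_fac2_bdry2 h0 h1 ht ht').sub_const 1) (fun t ht => ?_)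
    (fun θ _ => hψ' θ) (fun θ hθ => ?_)]
  · simp [bdry2_exp_im h0, bdry2_neg_exp_im, mom]
  · refine (norm_sub_le _ _).trans ?_
    have := norm_fac2_le h0 h1 hz hz1 hz2
    rw [norm_one]
    linarith
  · simp [bdry2_im_eq_zero h0 h1 ht]
  · rw [hψ', hψ', exp_I_mul_two_pi_sub, fac2_conj h0 h1 (exp_I_mul_im_pos hθ)]
    simp

theorem one_sub_mul_ne_zero_of_norm {z : ℂ} (hz : ‖z‖ = 1) : 1 - μ * z ≠ 0 := fun h => by
  have := congrArg norm (sub_eq_zero.1 h)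
  rw [norm_one, norm_mul, hz, Complex.norm_real, Real.norm_eq_abs, abs_of_pos h0] at this
  linarith

theorem one_add_mul_ne_zero_of_norm {z : ℂ} (hz : ‖z‖ = 1) : 1 + μ * z ≠ 0 := by
  have := one_sub_mul_ne_zero_of_norm h0 h1 (z := -z) (by rwa [norm_neg])
  rwa [mul_neg, sub_neg_eq_add] at this

theorem one_add_div_one_sub_re_pos {z : ℂ} (hz : ‖z‖ = 1) :
    0 < ((1 + μ * z) / (1 - μ * z)).re := by
  have hs : Complex.normSq z = 1 := by rw [← Complex.sq_norm, hz, one_pow]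
  have h : ((1 + μ * z) / (1 - μ * z)).re
      = (1 - μ ^ 2 * Complex.normSq z) / Complex.normSq (1 - μ * z) := by
    rw [Complex.div_re, Complex.normSq_apply z]
    simp
    ring
  rw [h, hs]
  exact div_pos (by nlinarith) (Complex.normSq_pos.2 (one_sub_mul_ne_zero_of_norm h0 h1 hz))

theorem exp_half_log_conj {z : ℂ} (hz : ‖z‖ = 1) :
    Complex.exp ((1 / 2 : ℂ) * Complex.log ((1 + μ * (starRingEnd ℂ) z) /
      (1 - μ * (starRingEnd ℂ) z))) =
    (starRingEnd ℂ) (Complex.exp ((1 / 2 : ℂ) * Complex.log ((1 + μ * z) / (1 - μ * z)))) := by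
  have ha : ((1 + μ * z) / (1 - μ * z)).arg ≠ Real.pi :=
    (Complex.arg_lt_pi_iff.2 (Or.inl (one_add_div_one_sub_re_pos h0 h1 hz).le)).ne
  rw [← Complex.exp_conj, map_mul, ← Complex.log_conj _ ha]
  simp [Complex.conj_ofNat]

theorem symbol_eq_fac1_mul_fac2 {z : ℂ} (hz : ‖z‖ = 1) (hz' : 0 < z.im) :
    (starRingEnd ℂ) (Complex.exp ((1 / 2 : ℂ) * Complex.log ((1 + μ * z) / (1 - μ * z)))) *
      (Complex.exp ((1 / 2 : ℂ) * Complex.log ((1 + μ * z) / (1 - μ * z))))⁻¹ * Complex.I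
      = fac1 μ z * fac2 μ z := by
  have hq := one_add_div_one_sub_re_pos h0 h1 hz
  have hq0 : (1 + μ * z) / (1 - μ * z) ≠ 0 := fun h => by simp [h] at hq
  set c := Complex.exp ((1 / 2 : ℂ) * Complex.log ((1 + μ * z) / (1 - μ * z))) with hc
  have hc2 : c ^ 2 = (1 + μ * z) / (1 - μ * z) := exp_half_log_sq hq0
  have hc0 : c ≠ 0 := Complex.exp_ne_zero _
  have him : 0 < ((starRingEnd ℂ) c * c⁻¹ * Complex.I).im := by
    have e : (starRingEnd ℂ) c * c⁻¹ = (starRingEnd ℂ) (c ^ 2) * ((Complex.normSq c)⁻¹ : ℝ) := by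
      rw [Complex.inv_def, map_pow]
      ring
    rw [e, Complex.mul_I_im, Complex.re_mul_ofReal, Complex.conj_re, hc2]
    exact mul_pos hq (inv_pos.2 (Complex.normSq_pos.2 hc0))
  have hm1 := mob_ne_zero (μ := μ) (by linarith) h1 hz'
  have hm2 := mob_ne_zero (μ := -μ) (by linarith) (by linarith) hz'
  have hsq : ((starRingEnd ℂ) c * c⁻¹ * Complex.I) ^ 2 = (fac1 μ z * fac2 μ z) ^ 2 := by
    have hz0 : z ≠ 0 := fun h => by simp [h] at hz
    have hcj : (starRingEnd ℂ) z = z⁻¹ := by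
      rw [Complex.inv_def, Complex.normSq_eq_norm_sq, hz]
      simp
    rw [mul_pow, mul_pow, ← map_pow, inv_pow, hc2, mul_pow, fac1, fac2,
      exp_neg_half_log_sq (neg_ne_zero.2 hm1), exp_half_log_sq hm2, Complex.I_sq, mob, mob]
    simp only [map_div₀, map_add, map_sub, map_mul, map_one, Complex.conj_ofReal, hcj]
    have n1 := one_sub_mul_ne_zero_of_norm h0 h1 hz
    have n2 := one_add_mul_ne_zero_of_norm h0 h1 hz
    have n3 : z - μ ≠ 0 := fun h => by
      rw [mob, h, zero_div] at hm1
      exact hm1 rfl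
    push_cast
    rw [neg_mul, sub_neg_eq_add, sub_neg_eq_add, inv_neg, inv_div, inv_div]
    have e1 : (1 + μ * z⁻¹) / (1 - μ * z⁻¹) = (z + μ) / (z - μ) := by
      rw [← mul_div_mul_left _ _ hz0, mul_add, mul_sub, mul_one, mul_left_comm,
        mul_inv_cancel₀ hz0, mul_one]
    rw [e1]
    field_simp
  rcases sq_eq_sq_iff_eq_or_eq_neg.1 hsq with h | h
  · exact h
  · have := fac1_mul_fac2_im_pos h0 h1 hz'
    rw [h, Complex.neg_im] at him
    linarith

theorem fc_symbol {ψ : ℝ → ℂ} (hψ : ∀ θ : ℝ, ψ θ =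
      Complex.exp ((1 / 2 : ℂ) * Complex.log
          ((1 + μ * Complex.exp (-(Complex.I * θ))) /
            (1 - μ * Complex.exp (-(Complex.I * θ))))) *
        (Complex.exp ((1 / 2 : ℂ) * Complex.log
          ((1 + μ * Complex.exp (Complex.I * θ)) /
            (1 - μ * Complex.exp (Complex.I * θ)))))⁻¹ * chi θ) (m : ℕ) :
    fc ψ (m + 1) = ((mom (fun x => wtB μ x * wtR μ x) (-Real.log μ) m +
      (-1) ^ m * mom (fun x => wtA μ x * (wtR μ x)⁻¹) (-Real.log μ) m : ℝ) : ℂ) := by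
  have hn : ∀ θ : ℝ, ‖Complex.exp (Complex.I * θ)‖ = 1 := fun θ => by
    rw [mul_comm, Complex.norm_exp_ofReal_mul_I]
  have hc : ∀ θ : ℝ, Complex.exp (-(Complex.I * θ)) =
      (starRingEnd ℂ) (Complex.exp (Complex.I * θ)) := fun θ => by
    rw [← Complex.exp_conj]
    simp
  have hψ' : ∀ θ ∈ Set.Ioo 0 Real.pi,
      ψ θ = fac1 μ (Complex.exp (Complex.I * θ)) * fac2 μ (Complex.exp (Complex.I * θ)) :=
    fun θ hθ => by
      rw [hψ, chi, if_pos (Real.sin_pos_of_pos_of_lt_pi hθ.1 hθ.2), hc,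
        exp_half_log_conj h0 h1 (hn θ),
        symbol_eq_fac1_mul_fac2 h0 h1 (hn θ) (exp_I_mul_im_pos hθ)]
  rw [fc_eq_mom h0 h1 (F := fun z => fac1 μ z * fac2 μ z) (V := fun t => bdry1 μ t * bdry2 μ t)
    (fun z hz => (differentiableAt_fac1 h0 h1 hz).mul (differentiableAt_fac2 h0 h1 hz))
    (fun z hz hz1 hz2 => ?_)
    (fun t ht ht' => (tendsto_fac1_bdry1 h0 h1 ht ht').mul (tendsto_fac2_bdry2 h0 h1 ht ht'))
    (fun t ht => ?_) hψ' (fun θ hθ => ?_)]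
  · simp only [Complex.mul_im, bdry1_exp_im, bdry2_exp_re, bdry2_exp_im h0, bdry1_neg_exp_im h0,
      bdry2_neg_exp_im, bdry1_neg_exp_re, mul_zero, zero_mul, zero_add, add_zero,
      mul_comm (wtA μ _)]
  · rw [norm_mul]
    have e1 := norm_fac1_le_one h0 h1 hz hz1
    have e2 := norm_fac2_le h0 h1 hz hz1 hz2
    nlinarith [norm_nonneg (fac1 μ z), norm_nonneg (fac2 μ z)]
  · simp [Complex.mul_im, bdry1_im_eq_zero h0 h1 ht, bdry2_im_eq_zero h0 h1 ht]
  · have hs : 0 < Real.sin θ := Real.sin_pos_of_pos_of_lt_pi hθ.1 hθ.2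
    rw [hψ, hψ, chi, chi, if_pos hs, Real.sin_two_pi_sub, if_neg (by linarith), hc, hc,
      exp_I_mul_two_pi_sub, exp_half_log_conj h0 h1 (hn θ), Complex.conj_conj]
    simp only [map_mul, map_inv₀, Complex.conj_I, Complex.conj_conj]

end symbols

/-! ### Estimates for the weights -/

section weights

theorem integral_abs_rpow {L : ℝ} (hL : 0 ≤ L) :
    ∫ x in (0 : ℝ)..L, |x - L| ^ (-(1 / 2) : ℝ) = 2 * Real.sqrt L := by
  have e : ∫ x in (0 : ℝ)..L, |x - L| ^ (-(1 / 2) : ℝ) =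
      ∫ x in (0 : ℝ)..L, (L - x) ^ (-(1 / 2) : ℝ) := by
    refine intervalIntegral.integral_congr fun x hx => ?_
    rw [Set.uIcc_of_le hL] at hx
    rw [abs_sub_comm, abs_of_nonneg (by linarith [hx.2])]
  rw [e, intervalIntegral.integral_comp_sub_left (fun x => x ^ (-(1 / 2) : ℝ)) L, sub_self,
    sub_zero, integral_rpow (Or.inl (by norm_num)), Real.sqrt_eq_rpow]
  norm_num
  ring

variable {μ : ℝ} (h0 : 0 < μ) (h1 : μ < 1)

include h0

theorem wtR_pos (x : ℝ) : 0 < wtR μ x :=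
  Real.sqrt_pos.2 (by have := Real.exp_pos x; positivity)

theorem continuous_wtR : Continuous (wtR μ) := by
  unfold wtR
  refine Continuous.sqrt (Continuous.div (by fun_prop) (by fun_prop) fun x => ?_)
  have := Real.exp_pos x
  positivity

theorem mul_exp_lt_one {x : ℝ} (hx : x < -Real.log μ) : μ * Real.exp x < 1 := by
  rw [mul_exp_neg_log h0, Real.exp_lt_one_iff]
  linarith

include h1

theorem neg_log_pos : 0 < -Real.log μ := by
  linarith [Real.log_neg h0 h1]

theorem wtB_le_one {x : ℝ} (hx : x ∈ Set.Ioo 0 (-Real.log μ)) : wtB μ x ≤ 1 := by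
  have := Real.one_lt_exp_iff.2 hx.1
  rw [wtB, Real.sqrt_le_one, div_le_one (by linarith)]
  nlinarith

theorem intervalIntegrable_wtB : IntervalIntegrable (wtB μ) volume 0 (-Real.log μ) := by
  rw [intervalIntegrable_iff_integrableOn_Ioo_of_le (neg_log_pos h0 h1).le]
  refine IntegrableOn.of_bound (by simp) ?_ 1 ?_
  · unfold wtB
    exact (by fun_prop : Measurable fun x : ℝ =>
      Real.sqrt ((1 - μ * Real.exp x) / (Real.exp x - μ))).aestronglyMeasurable
  · refine (ae_restrict_iff' measurableSet_Ioo).2 (Eventually.of_forall fun x hx => ?_)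
    rw [Real.norm_of_nonneg (show 0 ≤ wtB μ x from Real.sqrt_nonneg _)]
    exact wtB_le_one h0 h1 hx

theorem intervalIntegrable_wtA : IntervalIntegrable (wtA μ) volume 0 (-Real.log μ) := by
  refine (intervalIntegrable_sqrt_div h0 h1 le_rfl).mono_fun ?_ ?_
  · unfold wtA
    exact (by fun_prop : Measurable fun x : ℝ =>
      Real.sqrt ((Real.exp x - μ) / (1 - μ * Real.exp x))).aestronglyMeasurable
  · refine Eventually.of_forall fun x => ?_
    simp only
    rw [Real.norm_of_nonneg (show 0 ≤ wtA μ x from Real.sqrt_nonneg _),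
      Real.norm_of_nonneg (Real.sqrt_nonneg _)]
    refine Real.sqrt_le_sqrt ?_
    rw [abs_sub_comm]
    have e := Real.exp_pos x
    rcases le_or_gt (1 - μ * Real.exp x) 0 with h | h
    · refine (div_nonpos_of_nonneg_of_nonpos ?_ h).trans (by positivity)
      nlinarith
    · rw [abs_of_pos h]
      exact div_le_div_of_nonneg_right (by linarith) h.le

theorem intervalIntegrable_wtA_mul_inv :
    IntervalIntegrable (fun x => wtA μ x * (wtR μ x)⁻¹) volume 0 (-Real.log μ) :=
  (intervalIntegrable_wtA h0 h1).mul_continuousOn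
    ((continuous_wtR h0).inv₀ fun x => (wtR_pos h0 x).ne').continuousOn

theorem intervalIntegrable_wtB_mul :
    IntervalIntegrable (fun x => wtB μ x * wtR μ x) volume 0 (-Real.log μ) :=
  (intervalIntegrable_wtB h0 h1).mul_continuousOn (continuous_wtR h0).continuousOn

theorem mom_wtB_le (m : ℕ) : mom (wtB μ) (-Real.log μ) m ≤ 1 / (m + 1) := by
  refine (mom_le_of_le_const (neg_log_pos h0 h1).le zero_le_one (fun x hx => wtB_le_one h0 h1 hx)
    (intervalIntegrable_wtB h0 h1) m).trans ?_
  rw [one_mul]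
  refine div_le_div_of_nonneg_right ?_ (by positivity)
  linarith [Real.exp_pos (-(((m : ℝ) + 1) * -Real.log μ))]

theorem mom_wtB_zero_le : mom (wtB μ) (-Real.log μ) 0 ≤ 1 - μ := by
  refine (mom_le_of_le_const (neg_log_pos h0 h1).le zero_le_one (fun x hx => wtB_le_one h0 h1 hx)
    (intervalIntegrable_wtB h0 h1) 0).trans_eq ?_
  simp [Real.exp_log h0]

variable (h2 : 1 / 2 ≤ μ)

include h2

theorem wtR_sub_one_mem {x : ℝ} (hx : x ∈ Set.Ioo 0 (-Real.log μ)) :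
    0 ≤ wtR μ x - 1 ∧ wtR μ x - 1 ≤ (1 - μ) * (1 - Real.exp (-x)) := by
  have e1 := Real.one_lt_exp_iff.2 hx.1
  have e2 := mul_exp_lt_one h0 hx.2
  have e3 : 1 ≤ wtR μ x := by
    rw [wtR, Real.one_le_sqrt, one_le_div (by positivity)]
    nlinarith
  have e4 : wtR μ x ^ 2 = (Real.exp x + μ) / (1 + μ * Real.exp x) :=
    Real.sq_sqrt (by positivity)
  have e5 : wtR μ x ^ 2 - 1 ≤ (1 - μ) * (1 - Real.exp (-x)) := by
    rw [e4, Real.exp_neg, div_sub_one (by positivity), div_le_iff₀ (by positivity)]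
    have e6 : Real.exp x + μ - (1 + μ * Real.exp x) = (1 - μ) * (Real.exp x - 1) := by ring
    have e7 : (1 - μ) * (1 - (Real.exp x)⁻¹) * (1 + μ * Real.exp x) =
        (1 - μ) * (Real.exp x - 1) * ((1 + μ * Real.exp x) * (Real.exp x)⁻¹) := by
      field_simp
    rw [e6, e7]
    refine le_mul_of_one_le_right (by nlinarith) ?_
    rw [← div_eq_mul_inv, one_le_div (by positivity)]
    nlinarith
  exact ⟨by linarith, by nlinarith⟩

theorem abs_mom_wtB_sub_le (m : ℕ) :
    |mom (wtB μ) (-Real.log μ) m - mom (fun x => wtB μ x * wtR μ x) (-Real.log μ) m| ≤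
      (1 - μ) * (mom (wtB μ) (-Real.log μ) m - mom (wtB μ) (-Real.log μ) (m + 1)) := by
  refine abs_mom_sub_mom_le (neg_log_pos h0 h1).le (intervalIntegrable_wtB h0 h1)
    (intervalIntegrable_wtB_mul h0 h1)
    (fun x hx => ?_) m
  obtain ⟨e1, e2⟩ := wtR_sub_one_mem h0 h1 h2 hx
  have e3 : 0 ≤ wtB μ x := Real.sqrt_nonneg _
  rw [abs_sub_comm, abs_of_nonneg (by nlinarith)]
  nlinarith [mul_le_mul_of_nonneg_left e2 e3]

theorem abs_mom_wtA_sub_le (m : ℕ) :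
    |mom (wtA μ) (-Real.log μ) m - mom (fun x => wtA μ x * (wtR μ x)⁻¹) (-Real.log μ) m| ≤
      (1 - μ) * (mom (wtA μ) (-Real.log μ) m - mom (wtA μ) (-Real.log μ) (m + 1)) := by
  refine abs_mom_sub_mom_le (neg_log_pos h0 h1).le (intervalIntegrable_wtA h0 h1)
    (intervalIntegrable_wtA_mul_inv h0 h1) (fun x hx => ?_) m
  obtain ⟨e1, e2⟩ := wtR_sub_one_mem h0 h1 h2 hx
  have e3 : 0 ≤ wtA μ x := Real.sqrt_nonneg _
  have e4 : (wtR μ x)⁻¹ ≤ 1 := inv_le_one_of_one_le₀ (by linarith)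
  have e5 : 1 - (wtR μ x)⁻¹ ≤ wtR μ x - 1 := by
    have : wtR μ x * (wtR μ x)⁻¹ = 1 := mul_inv_cancel₀ (wtR_pos h0 x).ne'
    nlinarith
  rw [abs_of_nonneg (by nlinarith)]
  nlinarith [mul_le_mul_of_nonneg_left (e5.trans e2) e3]

theorem wtA_le {x : ℝ} (hx : x ∈ Set.Ioo 0 (-Real.log μ)) :
    wtA μ x ≤ Real.sqrt (6 * (1 - μ)) * |x - -Real.log μ| ^ (-(1 / 2) : ℝ) := by
  have e1 := Real.one_lt_exp_iff.2 hx.1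
  have e2 := mul_exp_lt_one h0 hx.2
  have hp : 0 < |x - -Real.log μ| := abs_pos.2 (sub_ne_zero.2 hx.2.ne)
  have e3 := mul_abs_sub_le h0 h1 hx.1.le
  rw [abs_sub_comm (μ * Real.exp x), abs_of_pos (by linarith : 0 < 1 - μ * Real.exp x)] at e3
  rw [Real.rpow_neg hp.le, ← Real.sqrt_eq_rpow, ← Real.sqrt_inv, ← Real.sqrt_mul (by linarith),
    wtA]
  refine Real.sqrt_le_sqrt ?_
  rw [← div_eq_mul_inv, div_le_div_iff₀ (by linarith) hp]
  have e4 : Real.exp x - μ ≤ 3 * (1 - μ) := by nlinarith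
  have e5 : |x - -Real.log μ| ≤ 2 * (1 - μ * Real.exp x) := by nlinarith
  calc (Real.exp x - μ) * |x - -Real.log μ| ≤ 3 * (1 - μ) * (2 * (1 - μ * Real.exp x)) :=
        mul_le_mul e4 e5 hp.le (by linarith)
    _ = 6 * (1 - μ) * (1 - μ * Real.exp x) := by ring

theorem neg_log_le : -Real.log μ ≤ 2 * (1 - μ) := by
  have := Real.log_le_sub_one_of_pos (inv_pos.2 h0)
  rw [Real.log_inv] at this
  refine this.trans ?_
  rw [inv_eq_one_div, div_sub_one h0.ne', div_le_iff₀ h0]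
  nlinarith

theorem integral_wtA_le :
    1 / Real.pi * ∫ x in (0 : ℝ)..(-Real.log μ), wtA μ x ≤ 3 * (1 - μ) := by
  have hL := neg_log_pos h0 h1
  have hi := intervalIntegral.integral_mono_on_of_le_Ioo hL.le (intervalIntegrable_wtA h0 h1)
    ((intervalIntegrable_abs_rpow (-Real.log μ) _ hL.le le_rfl).const_mul
      (Real.sqrt (6 * (1 - μ)))) fun x hx => wtA_le h0 h1 h2 hx
  rw [intervalIntegral.integral_const_mul, integral_abs_rpow hL.le] at hi
  have e1 : Real.sqrt (6 * (1 - μ)) * (2 * Real.sqrt (-Real.log μ)) ≤ 9 * (1 - μ) := by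
    rw [mul_left_comm, ← Real.sqrt_mul (by linarith)]
    have : Real.sqrt (6 * (1 - μ) * -Real.log μ) ≤ 4 * (1 - μ) := by
      rw [Real.sqrt_le_left (by linarith)]
      nlinarith [neg_log_le h0 h1 h2]
    linarith
  rw [one_div_mul_eq_div, div_le_iff₀ Real.pi_pos]
  nlinarith [Real.pi_gt_three]

theorem mom_wtA_le (m : ℕ) : mom (wtA μ) (-Real.log μ) m ≤ 3 * (1 - μ) := by
  refine le_trans (mul_le_mul_of_nonneg_left ?_ (by positivity)) (integral_wtA_le h0 h1 h2)
  refine intervalIntegral.integral_mono_on_of_le_Ioo (neg_log_pos h0 h1).le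
    (intervalIntegrable_mul_exp (intervalIntegrable_wtA h0 h1) m)
    (intervalIntegrable_wtA h0 h1) fun x hx => mul_le_of_le_one_right (Real.sqrt_nonneg _) ?_
  rw [Real.exp_le_one_iff, neg_nonpos]
  have := hx.1
  positivity

theorem mom_wtA_le_div (m : ℕ) : mom (wtA μ) (-Real.log μ) m ≤ 10 / (m + 1) := by
  have hL := neg_log_pos h0 h1
  set L := -Real.log μ with hLd
  have hLδ : 1 - μ ≤ L := by linarith [Real.log_le_sub_one_of_pos h0]
  set E := Real.exp (-((m + 1) * (L / 2))) with hE
  have hE' : E ≤ 2 / ((m + 1) * (1 - μ)) := by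
    rw [hE, Real.exp_neg]
    have e1 := Real.add_one_le_exp (((m : ℝ) + 1) * (L / 2))
    have e2 : ((m : ℝ) + 1) * (1 - μ) / 2 ≤ Real.exp ((m + 1) * (L / 2)) := by
      have : ((m : ℝ) + 1) * (1 - μ) ≤ (m + 1) * L := by gcongr
      linarith
    have e3 : 0 < ((m : ℝ) + 1) * (1 - μ) / 2 := by
      have : 0 < 1 - μ := by linarith
      positivity
    refine (inv_anti₀ e3 e2).trans_eq ?_
    rw [inv_div]
  have hpt : ∀ x ∈ Set.Ioo 0 L, wtA μ x * Real.exp (-((m + 1) * x)) ≤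
      4 * Real.exp (-((m + 1) * x)) + wtA μ x * E := fun x hx => by
    have ha : 0 ≤ wtA μ x := Real.sqrt_nonneg _
    rcases le_total x (L / 2) with h | h
    · have : wtA μ x ≤ 4 := by
        have e1 := Real.one_lt_exp_iff.2 hx.1
        have e2 := mul_exp_lt_one h0 hx.2
        have e3 := mul_abs_sub_le h0 h1 hx.1.le
        rw [abs_sub_comm (μ * Real.exp x), abs_of_pos (by linarith : 0 < 1 - μ * Real.exp x),
          abs_of_neg (by linarith [hx.2])] at e3
        have e4 : Real.exp x - μ ≤ 3 * (1 - μ) := by nlinarith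
        rw [wtA, Real.sqrt_le_left (by norm_num), div_le_iff₀ (by linarith)]
        nlinarith
      have := mul_le_mul_of_nonneg_right this (Real.exp_pos (-((m + 1) * x))).le
      have := mul_nonneg ha (Real.exp_pos (-((m + 1) * (L / 2)))).le
      linarith
    · have h3 : Real.exp (-((m + 1) * x)) ≤ E := by
        rw [hE, Real.exp_le_exp, neg_le_neg_iff]
        gcongr
      have := mul_le_mul_of_nonneg_left h3 ha
      have := (Real.exp_pos (-((m + 1) * x))).le
      linarith
  have hi2 : IntervalIntegrable (fun x : ℝ => 4 * Real.exp (-((m + 1) * x))) volume 0 L :=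
    Continuous.intervalIntegrable (by fun_prop) _ _
  have hi := intervalIntegral.integral_mono_on_of_le_Ioo hL.le
    (intervalIntegrable_mul_exp (intervalIntegrable_wtA h0 h1) m)
    (hi2.add ((intervalIntegrable_wtA h0 h1).mul_const E)) hpt
  rw [intervalIntegral.integral_add hi2 ((intervalIntegrable_wtA h0 h1).mul_const E),
    intervalIntegral.integral_const_mul, intervalIntegral.integral_mul_const,
    integral_exp_neg_succ_mul] at hi
  have hm : (0 : ℝ) < m + 1 := by positivity
  have f1 : 1 / Real.pi * (4 * ((1 - Real.exp (-((m + 1) * L))) / (m + 1))) ≤ 4 / (m + 1) := by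
    have g1 : (1 - Real.exp (-((m + 1) * L))) / (m + 1) ≤ 1 / (m + 1) := by
      refine div_le_div_of_nonneg_right ?_ hm.le
      linarith [Real.exp_pos (-(((m : ℝ) + 1) * L))]
    have g2 : 1 / Real.pi * (4 * ((1 - Real.exp (-((m + 1) * L))) / (m + 1))) ≤
        1 / Real.pi * (4 * (1 / (m + 1))) := by
      have := Real.pi_pos
      gcongr
    refine g2.trans ?_
    have g3 := mul_le_mul_of_nonneg_right one_div_pi_le_one
      (by positivity : (0 : ℝ) ≤ 4 * (1 / (m + 1)))
    refine g3.trans_eq ?_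
    ring
  have f2 : 1 / Real.pi * ((∫ x in (0 : ℝ)..L, wtA μ x) * E) ≤ 6 / (m + 1) := by
    rw [← mul_assoc]
    have hE0 : 0 ≤ E := (Real.exp_pos _).le
    refine (mul_le_mul (integral_wtA_le h0 h1 h2) hE' hE0 (by linarith)).trans_eq ?_
    have : 1 - μ ≠ 0 := by linarith
    field_simp
    norm_num
  calc mom (wtA μ) L m ≤ 1 / Real.pi * _ :=
        mul_le_mul_of_nonneg_left hi (by positivity)
    _ ≤ 4 / (m + 1) + 6 / (m + 1) := by
        rw [mul_add]
        exact add_le_add f1 f2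
    _ = 10 / (m + 1) := by ring

end weights

/-! ### Asymptotic factorization of the determinants -/

section comparison

variable {μ : ℝ} {A A1 A2 : l2 →L[ℂ] l2}

/-- The three operators are invertible, and the determinants of the sections of their inverses
factorize up to a multiple of `√n (1 - μ)`. -/
theorem exists_inverse_and_norm_detP_sub_mul_le (h0 : 0 < μ) (h1 : μ < 1)
    (hA : ∀ j k : ℕ, ent A j k = (if j = k then 1 else 0) +
      ((mom (fun x => wtB μ x * wtR μ x) (-Real.log μ) (j + k) + (-1) ^ (j + k) *
        mom (fun x => wtA μ x * (wtR μ x)⁻¹) (-Real.log μ) (j + k) : ℝ) : ℂ))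
    (hA1 : ∀ j k : ℕ, ent A1 j k = (if j = k then 1 else 0) +
      ((mom (wtB μ) (-Real.log μ) (j + k) : ℝ) : ℂ))
    (hA2 : ∀ j k : ℕ, ent A2 j k = (if j = k then 1 else 0) +
      (((-1) ^ (j + k) * mom (wtA μ) (-Real.log μ) (j + k) : ℝ) : ℂ)) :
    ∃ B B1 B2 : l2 →L[ℂ] l2,
      ((A ∘L B = 1 ∧ B ∘L A = 1) ∧ (A1 ∘L B1 = 1 ∧ B1 ∘L A1 = 1) ∧
        (A2 ∘L B2 = 1 ∧ B2 ∘L A2 = 1)) ∧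
      (1 / 2 ≤ μ → ∀ n : ℕ,
        ‖detP n B - detP n B1 * detP n B2‖ ≤ 806 * (Real.sqrt n * (1 - μ))) := by
  have hL := (neg_log_pos h0 h1).le
  have nA : ∀ x ∈ Set.Ioo 0 (-Real.log μ), 0 ≤ wtA μ x := fun x _ => Real.sqrt_nonneg _
  have nB : ∀ x ∈ Set.Ioo 0 (-Real.log μ), 0 ≤ wtB μ x := fun x _ => Real.sqrt_nonneg _
  have iA := intervalIntegrable_wtA h0 h1
  have iB := intervalIntegrable_wtB h0 h1
  obtain ⟨B, hB, nB'⟩ := HankelNonneg.exists_inverse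
    ((hankelNonneg_mom hL (fun x hx => mul_nonneg (nB x hx) (wtR_pos h0 x).le)
      (intervalIntegrable_wtB_mul h0 h1)).add
    (hankelNonneg_mom hL (fun x hx => mul_nonneg (nA x hx) (inv_nonneg.2 (wtR_pos h0 x).le))
      (intervalIntegrable_wtA_mul_inv h0 h1)).alternating) hA
  obtain ⟨B1, hB1, nB1⟩ := (hankelNonneg_mom hL nB iB).exists_inverse hA1
  obtain ⟨B2, hB2, nB2⟩ := (hankelNonneg_mom hL nA iA).alternating.exists_inverse hA2
  refine ⟨B, B1, B2, ⟨hB, hB1, hB2⟩, fun h2 n => ?_⟩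
  have hδ : 0 < 1 - μ := by linarith
  have mA := mom_nonneg hL nA iA
  have mB := mom_nonneg hL nB iB
  have aA := antitone_mom hL nA iA
  have aB := antitone_mom hL nB iB
  have b0 := mom_wtB_zero_le h0 h1
  have sq_le : ∀ {c : ℕ → ℝ}, (∀ m, 0 ≤ c m) → c 0 ≤ 3 * (1 - μ) →
      ((1 - μ) * c 0) ^ 2 ≤ (3 * (1 - μ)) ^ 2 := fun hc hc' => by
    have := hc 0
    refine pow_le_pow_left₀ (by positivity) ?_ 2
    nlinarith
  have key := norm_detP_sub_mul_le hA hA1 hA2 hB hB1 hB2 nB' nB1 nB2 aA mA aB mB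
    (T := 3 * (1 - μ)) (S := 4 * 10 ^ 2 * (1 - μ)) (by linarith)
    (sum_sq_le_of_le_of_le_div hδ mA
      (fun m => (mom_wtA_le h0 h1 h2 m).trans (by linarith)) (mom_wtA_le_div h0 h1 h2))
    (sum_sq_le_of_le_of_le_div hδ mB (fun m => ((aB m.zero_le).trans b0).trans (by linarith))
      fun m => (mom_wtB_le h0 h1 m).trans
        (div_le_div_of_nonneg_right (by norm_num) (by positivity)))
    (fun M N => (sum_sum_sq_le_of_le_sub_succ mB (antitone_mom_sub_succ hL nB iB)
      (fun m => sub_nonneg.2 (aB m.le_succ)) (abs_mom_wtB_sub_le h0 h1 h2) M N).trans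
        (sq_le mB (by linarith)))
    (fun M N => (sum_sum_sq_le_of_le_sub_succ mA (antitone_mom_sub_succ hL nA iA)
      (fun m => sub_nonneg.2 (aA m.le_succ)) (abs_mom_wtA_sub_le h0 h1 h2) M N).trans
        (sq_le mA (mom_wtA_le h0 h1 h2 0))) n
  refine key.trans_eq ?_
  ring

end comparison

theorem one_sub_sin_div_cos_mem {y : ℝ} (hy0 : 0 < y) (hy : y < Real.pi / 2) :
    0 < (1 - Real.sin y) / Real.cos y ∧ (1 - Real.sin y) / Real.cos y < 1 := by
  have hc : 0 < Real.cos y := Real.cos_pos_of_mem_Ioo ⟨by linarith, hy⟩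
  have hs : 0 < Real.sin y := Real.sin_pos_of_pos_of_lt_pi hy0 (by linarith)
  have h := Real.sin_sq_add_cos_sq y
  refine ⟨div_pos (by nlinarith) hc, ?_⟩
  rw [div_lt_one hc]
  nlinarith [mul_pos hs hc]

theorem one_sub_div_cos_le {y : ℝ} (hy0 : 0 ≤ y) (hy1 : y ≤ 1) :
    1 - (1 - Real.sin y) / Real.cos y ≤ 2 * y := by
  have h1 := Real.one_sub_sq_div_two_le_cos (x := y)
  have h2 := Real.sin_le hy0
  have h3 := Real.cos_le_one y
  have hc : 1 / 2 ≤ Real.cos y := by nlinarith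
  rw [one_sub_div (by linarith), div_le_iff₀ (by linarith)]
  nlinarith

theorem tendsto_sqrt_mul_div (c : ℝ) :
    Tendsto (fun n : ℕ => Real.sqrt n * (c / n)) atTop (nhds 0) := by
  have h : Tendsto (fun n : ℕ => c * (Real.sqrt n)⁻¹) atTop (nhds (c * 0)) :=
    ((tendsto_inv_atTop_zero.comp Real.tendsto_sqrt_atTop).comp
      tendsto_natCast_atTop_atTop).const_mul c
  rw [mul_zero] at h
  refine h.congr fun n => ?_
  rw [mul_div_left_comm, Real.sqrt_div_self]

/-- Fix `α > 0`.  With `ψ_{α,n}`, `ψ_n^{(1)}`, `ψ_n^{(−1)}` as in the paper, the operators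
`I + H(ψ_{α,n})`, `I + H(ψ_n^{(1)})`, `I + H(ψ_n^{(−1)})` are invertible and
`det[Pₙ(I+H(ψ_{α,n}))⁻¹Pₙ] − det[Pₙ(I+H(ψ_n^{(1)}))⁻¹Pₙ]·det[Pₙ(I+H(ψ_n^{(−1)}))⁻¹Pₙ] → 0`
as `n → ∞`. -/
theorem stmt17 (α : ℝ) (hα : 0 < α)
    (μ : ℕ → ℝ)
    (hμ : ∀ n : ℕ, μ n = (1 - Real.sin (α / (2 * n))) / Real.cos (α / (2 * n)))
    (ψ : ℕ → ℝ → ℂ)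
    (hψ : ∀ n : ℕ, α / Real.pi < n → ∀ θ : ℝ, ψ n θ =
      Complex.exp ((1 / 2 : ℂ) * Complex.log
          ((1 + μ n * Complex.exp (-(Complex.I * θ))) /
            (1 - μ n * Complex.exp (-(Complex.I * θ))))) *
        (Complex.exp ((1 / 2 : ℂ) * Complex.log
          ((1 + μ n * Complex.exp (Complex.I * θ)) /
            (1 - μ n * Complex.exp (Complex.I * θ)))))⁻¹ * chi θ)
    (ψ1 ψm : ℕ → ℝ → ℂ)
    (hψ1 : ∀ n : ℕ, α / Real.pi < n → ∀ θ : ℝ, ψ1 n θ =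
      uc (-(1/2)) ((Complex.exp (Complex.I * θ) - μ n) /
        (1 - μ n * Complex.exp (Complex.I * θ))) - 1)
    (hψm : ∀ n : ℕ, α / Real.pi < n → ∀ θ : ℝ, ψm n θ =
      uc (1/2) ((-Complex.exp (Complex.I * θ) - μ n) /
        (1 + μ n * Complex.exp (Complex.I * θ))) - 1)
    (A A1 A2 : ℕ → l2 →L[ℂ] l2)
    (hA : ∀ n : ℕ, α / Real.pi < n → ∀ j k : ℕ,
      ent (A n) j k = (if j = k then 1 else 0) + fc (ψ n) ((j : ℤ) + k + 1))
    (hA1 : ∀ n : ℕ, α / Real.pi < n → ∀ j k : ℕ,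
      ent (A1 n) j k = (if j = k then 1 else 0) + fc (ψ1 n) ((j : ℤ) + k + 1))
    (hA2 : ∀ n : ℕ, α / Real.pi < n → ∀ j k : ℕ,
      ent (A2 n) j k = (if j = k then 1 else 0) + fc (ψm n) ((j : ℤ) + k + 1)) :
    ∃ B B1 B2 : ℕ → l2 →L[ℂ] l2,
      (∀ n : ℕ, α / Real.pi < n →
        (A n ∘L B n = 1 ∧ B n ∘L A n = 1) ∧
        (A1 n ∘L B1 n = 1 ∧ B1 n ∘L A1 n = 1) ∧
        (A2 n ∘L B2 n = 1 ∧ B2 n ∘L A2 n = 1)) ∧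
      Tendsto (fun n : ℕ => detP n (B n) - detP n (B1 n) * detP n (B2 n))
        atTop (nhds 0) := by
  have hpos : ∀ n : ℕ, α / Real.pi < n → (0 : ℝ) < n := fun n hn =>
    (div_pos hα Real.pi_pos).trans hn
  have hμ01 : ∀ n : ℕ, α / Real.pi < n → 0 < μ n ∧ μ n < 1 := fun n hn => by
    have hn0 := hpos n hn
    rw [hμ]
    refine one_sub_sin_div_cos_mem (by positivity) ?_
    rw [div_lt_iff₀ Real.pi_pos] at hn
    rw [div_lt_iff₀ (by positivity)]
    linarith
  have key : ∀ n : ℕ, ∃ B B1 B2 : l2 →L[ℂ] l2, α / Real.pi < n →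
      ((A n ∘L B = 1 ∧ B ∘L A n = 1) ∧ (A1 n ∘L B1 = 1 ∧ B1 ∘L A1 n = 1) ∧
        (A2 n ∘L B2 = 1 ∧ B2 ∘L A2 n = 1)) ∧
      (1 / 2 ≤ μ n →
        ‖detP n B - detP n B1 * detP n B2‖ ≤ 806 * (Real.sqrt n * (1 - μ n))) := fun n => by
    by_cases hn : α / Real.pi < n
    · obtain ⟨h0, h1⟩ := hμ01 n hn
      obtain ⟨B, B1, B2, hB, hle⟩ := exists_inverse_and_norm_detP_sub_mul_le h0 h1
        (A := A n) (A1 := A1 n) (A2 := A2 n)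
        (fun j k => by rw [hA n hn, ← fc_symbol h0 h1 (hψ n hn), Nat.cast_add])
        (fun j k => by rw [hA1 n hn, ← fc_symbol1 h0 h1 (hψ1 n hn), Nat.cast_add])
        (fun j k => by rw [hA2 n hn, ← fc_symbol2 h0 h1 (hψm n hn), Nat.cast_add])
      exact ⟨B, B1, B2, fun _ => ⟨hB, fun h2 => hle h2 n⟩⟩
    · exact ⟨0, 0, 0, fun h => absurd h hn⟩
  choose B B1 B2 h using key
  refine ⟨B, B1, B2, fun n hn => (h n hn).1, ?_⟩
  refine squeeze_zero_norm' ?_ (by simpa using (tendsto_sqrt_mul_div α).const_mul 806)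
  have hev : ∀ᶠ n : ℕ in atTop, max (α / Real.pi) (2 * α) < n :=
    tendsto_natCast_atTop_atTop.eventually (eventually_gt_atTop _)
  filter_upwards [hev] with n hn
  have hn1 := (le_max_left _ _).trans_lt hn
  have hn2 := (le_max_right _ _).trans_lt hn
  have hn0 := hpos n hn1
  have hle : 1 - μ n ≤ α / n := by
    rw [hμ]
    refine (one_sub_div_cos_le (by positivity) ?_).trans_eq (by field_simp)
    rw [div_le_one (by positivity)]
    linarith
  have h2 : α / n ≤ 1 / 2 := by
    rw [div_le_div_iff₀ hn0 two_pos]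
    linarith
  refine ((h n hn1).2 (by linarith)).trans ?_
  gcongr

end
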